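/- Let β>0, f ∈ C¹([0,1]), and for each integer n≥2 let u_n ∈ PC_{1/n}(0,1) be a minimizer of DPMF_n(β,f,(0,1),·). Let x_n = k_n/n with k_n ∈ {0,…,n−1} and x_n → x_∞ ∈ (0,1). Set H = (1/(β|f′(x_∞)|²))^{1/3} and V = f′(x_∞)H. Then for every w ∈ Obl(H,V) there exists a sequence {x_n′} ⊂ (0,1) such that limsup_{n→+∞} (x_n′ − x_n)/ω(n) ≤ H and the functions y ↦ (u_n(x_n′ + ω(n)y) − f(x_n′))/ω(n) converge to w locally strictly in BV_loc(ℝ). -/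

import Mathlib

/-!
Blocks of length `2Hω(n)` are cut off to the left of `x_n`, and the competitor which on each block
equals `f` at its midpoint bounds the energy of a minimizer on the window they form. Measured in
units of `ω(n)³`, each block costs `4/3` for its jump and `2/3` for its fidelity, because
`β f'(x_∞)² H³ = 1`; changing to and from the competitor at the two ends of the window costs a
constant, thanks to the crude bound `|u_n| ≤ C√n`.

Conversely, the transitions of slope at most `n ^ (2/3 (1 - t))`, slightly less than the slope of a
jump of height `ω(n)`, contribute only `o(ω(n))` to the variation, so the minimizer is cut into
pieces at its other transitions. A piece of length `2Hλω(n)` on which the minimizer is offset by `dω(n)` costs at least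
`4/3 + 2λ³/3 + 2Hβλd² = 2λ + (2/3)(λ - 1)²(λ + 2) + 2Hβλd²`. The terms `2λ` add up to the upper
bound, so the total excess is bounded independently of the number of blocks, and by the pigeonhole
principle there are arbitrarily long runs of pieces with `λ ≈ 1` and `d ≈ 0`. Blown up around a
point at distance `Hτω(n)` to the left of the midpoint of its central piece, such a run is close to
the oblique translation with parameter `τ`. Since all these points lie to the left of `x_n`, a
diagonal choice of centres proves the theorem.

If `f'(x_∞) = 0` then `H = V = 0` (because `1 / 0 = 0`) and `w = 0`; in that case the run is
replaced by a single long block of negligible energy.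
-/

open MeasureTheory Filter Set

namespace PeronaMalik

/-- `a_{δ,*} = δ⌊a/δ⌋`, the lower `δ`-approximation of `a`. -/
noncomputable def lowGrid (δ a : ℝ) : ℝ := δ * (⌊a / δ⌋ : ℤ)

/-- `b_δ^* = δ⌈b/δ⌉`, the upper `δ`-approximation of `b`. -/
noncomputable def highGrid (δ b : ℝ) : ℝ := δ * (⌈b / δ⌉ : ℤ)

/-- `u` is piecewise constant at scale `δ`: constant on every interval `[zδ, (z+1)δ)`. -/
def IsPC (δ : ℝ) (u : ℝ → ℝ) : Prop :=
  ∀ z : ℤ, ∀ x ∈ Set.Ico ((z : ℝ) * δ) (((z : ℝ) + 1) * δ), u x = u ((z : ℝ) * δ)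

/-- Discrete derivative `D^δ u (x) = (u(x+δ) - u(x))/δ`. -/
noncomputable def Dd (δ : ℝ) (u : ℝ → ℝ) (x : ℝ) : ℝ := (u (x + δ) - u x) / δ

/-- The discrete Perona–Malik functional with fidelity term on `(a,b)`. -/
noncomputable def DPMF (n : ℕ) (β : ℝ) (f : ℝ → ℝ) (a b : ℝ) (u : ℝ → ℝ) : ℝ :=
  (∫ x in lowGrid (1 / (n : ℝ)) a..(highGrid (1 / (n : ℝ)) b - 1 / (n : ℝ)),
      Real.log (1 + (Dd (1 / (n : ℝ)) u x) ^ 2)) +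
    β * ∫ x in a..b, (u x - f x) ^ 2

/-- `u` is a minimizer of `DPMF n β f (0,1)` over `PC_{1/n}(0,1)`. -/
def IsMinimizer (n : ℕ) (β : ℝ) (f : ℝ → ℝ) (u : ℝ → ℝ) : Prop :=
  IsPC (1 / (n : ℝ)) u ∧
    ∀ v : ℝ → ℝ, IsPC (1 / (n : ℝ)) v → DPMF n β f 0 1 u ≤ DPMF n β f 0 1 v

/-- `m(n,β,f)`, the minimum value of the discrete Perona–Malik functional. -/
noncomputable def mval (n : ℕ) (β : ℝ) (f : ℝ → ℝ) : ℝ :=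
  sInf ((fun u => DPMF n β f 0 1 u) '' {u | IsPC (1 / (n : ℝ)) u})

/-- `ω(n) = (log n / n)^{1/3}`. -/
noncomputable def omg (n : ℕ) : ℝ := (Real.log n / n) ^ ((1 : ℝ) / 3)

/-- `δ(n) = 1/(n ω(n))`. -/
noncomputable def dlt (n : ℕ) : ℝ := 1 / ((n : ℝ) * omg n)

/-- The rescaled discrete Perona–Malik functional. -/
noncomputable def RDPM (n : ℕ) (a b : ℝ) (u : ℝ → ℝ) : ℝ :=
  (1 / omg n ^ 2) *
    ∫ x in lowGrid (dlt n) a..(highGrid (dlt n) b - dlt n),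
      Real.log (1 + (Dd (dlt n) u x) ^ 2)

/-- The rescaled discrete Perona–Malik functional with fidelity term. -/
noncomputable def RDPMF (n : ℕ) (β : ℝ) (f : ℝ → ℝ) (a b : ℝ) (u : ℝ → ℝ) : ℝ :=
  RDPM n a b u + β * ∫ x in Set.Ioo a b, (u x - f x) ^ 2

/-- `u` is a step function with finitely many jumps on `(a,b)`. -/
def IsStep (a b : ℝ) (u : ℝ → ℝ) : Prop :=
  ∃ (s : Finset ℝ) (c : ℝ) (J : ℝ → ℝ),
    (∀ p ∈ s, p ∈ Set.Ioo a b ∧ J p ≠ 0) ∧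
    ∀ x ∈ Set.Ioo a b, u x = c + ∑ p ∈ s, (if p ≤ x then J p else 0)

/-- The set of jump (discontinuity) points of `u` inside `(a,b)`. -/
def jumpSet (a b : ℝ) (u : ℝ → ℝ) : Set ℝ :=
  {x ∈ Set.Ioo a b | ¬ ContinuousAt u x}

/-- The limit functional `JF(α,β,f,(a,b),u) = α·#jumps + β∫(u-f)²`. -/
noncomputable def JF (α β : ℝ) (f : ℝ → ℝ) (a b : ℝ) (u : ℝ → ℝ) : ℝ :=
  α * ((jumpSet a b u).ncard : ℝ) + β * ∫ x in Set.Ioo a b, (u x - f x) ^ 2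

/-- Strict convergence in `BV((a,b))`: `L¹` convergence plus convergence of
total variations. -/
def StrictBV (useq : ℕ → ℝ → ℝ) (u : ℝ → ℝ) (a b : ℝ) : Prop :=
  Tendsto (fun k => ∫ x in Set.Ioo a b, |useq k x - u x|) atTop (nhds 0) ∧
  Tendsto (fun k => eVariationOn (useq k) (Set.Ioo a b)) atTop
    (nhds (eVariationOn u (Set.Ioo a b)))

/-- Locally strict convergence in `BV_loc(ℝ)`: strict convergence on every bounded
interval whose endpoints are not jump points of the limit. -/
def LocStrictBV (useq : ℕ → ℝ → ℝ) (u : ℝ → ℝ) : Prop :=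
  ∀ a b : ℝ, a < b → ContinuousAt u a → ContinuousAt u b → StrictBV useq u a b

/-- `S(x) = 2⌊(x+1)/2⌋`. -/
noncomputable def stairS (x : ℝ) : ℝ := 2 * (⌊(x + 1) / 2⌋ : ℤ)

/-- The canonical `(H,V)`-staircase `S_{H,V}(x) = V·S(x/H)`. -/
noncomputable def canStair (H V : ℝ) (x : ℝ) : ℝ := V * stairS (x / H)

/-- Oblique translations of the canonical `(H,V)`-staircase. -/
def Obl (H V : ℝ) (v : ℝ → ℝ) : Prop :=
  ∃ τ ∈ Set.Icc (-1 : ℝ) 1, ∀ x, v x = canStair H V (x - H * τ) + V * τ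

/-- Graph translations of horizontal type of the canonical `(H,V)`-staircase. -/
def Orz (H V : ℝ) (v : ℝ → ℝ) : Prop :=
  ∃ τ ∈ Set.Icc (-1 : ℝ) 1, ∀ x, v x = canStair H V (x - H * τ)

/-- `μ_n(β,L,M)`: minimum of the rescaled functional with affine forcing term. -/
noncomputable def muDisc (n : ℕ) (β L M : ℝ) : ℝ :=
  sInf ((fun u => RDPMF n β (fun x => M * x) 0 L u) '' {u | IsPC (dlt n) u})

/-- `μ*_n(β,L,M)`: same as `μ_n` but with boundary conditions `u(0)=0`, `u(L^*)=ML`. -/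
noncomputable def muDiscStar (n : ℕ) (β L M : ℝ) : ℝ :=
  sInf ((fun u => RDPMF n β (fun x => M * x) 0 L u) ''
    {u | IsPC (dlt n) u ∧ u 0 = 0 ∧ u (highGrid (dlt n) L - dlt n) = M * L})

/-- `μ(α,β,L,M)`: minimum of the limit functional with affine forcing term. -/
noncomputable def muLim (α β L M : ℝ) : ℝ :=
  sInf ((fun u => JF α β (fun x => M * x) 0 L u) '' {u | IsStep 0 L u})

/-- `μ*(α,β,L,M)`: same as `μ` but with boundary values `u(0⁺)=0`, `u(L⁻)=ML`. -/
noncomputable def muLimStar (α β L M : ℝ) : ℝ :=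
  sInf ((fun u => JF α β (fun x => M * x) 0 L u) ''
    {u | IsStep 0 L u ∧ Tendsto u (nhdsWithin 0 (Set.Ioi 0)) (nhds 0) ∧
         Tendsto u (nhdsWithin L (Set.Iio L)) (nhds (M * L))})

/-- `u` and `v` have the same boundary values `u(a⁺)=v(a⁺)`, `u(b⁻)=v(b⁻)`. -/
def SameBdry (a b : ℝ) (u v : ℝ → ℝ) : Prop :=
  (∀ c : ℝ, Tendsto v (nhdsWithin a (Set.Ioi a)) (nhds c) →
     Tendsto u (nhdsWithin a (Set.Ioi a)) (nhds c)) ∧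
  (∀ c : ℝ, Tendsto v (nhdsWithin b (Set.Iio b)) (nhds c) →
     Tendsto u (nhdsWithin b (Set.Iio b)) (nhds c))

/-- `v` is a local minimizer for `JF(α,β,f,(a,b),·)` among step functions with the
same boundary values. -/
def IsLocalMinJF (α β : ℝ) (f : ℝ → ℝ) (a b : ℝ) (v : ℝ → ℝ) : Prop :=
  IsStep a b v ∧
  ∀ u : ℝ → ℝ, IsStep a b u → SameBdry a b u v → JF α β f a b v ≤ JF α β f a b u

/-- `v` is an entire local minimizer for `JF(α,β,f,·,·)`. -/
def IsEntireLocalMinJF (α β : ℝ) (f : ℝ → ℝ) (v : ℝ → ℝ) : Prop :=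
  ∀ a b : ℝ, a < b → IsLocalMinJF α β f a b v

/-- `v` is a local minimizer for `RDPMF_n(β,f,(a,b),·)` among piecewise constant
functions with the same boundary values. -/
def IsLocalMinRDPMF (n : ℕ) (β : ℝ) (f : ℝ → ℝ) (a b : ℝ) (v : ℝ → ℝ) : Prop :=
  IsPC (dlt n) v ∧
  ∀ u : ℝ → ℝ, IsPC (dlt n) u →
    u (lowGrid (dlt n) a) = v (lowGrid (dlt n) a) →
    u (highGrid (dlt n) b - dlt n) = v (highGrid (dlt n) b - dlt n) →
    RDPMF n β f a b v ≤ RDPMF n β f a b u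
/-! ### The functional as a discrete energy -/

/-- The energy of a transition of height `s` between two neighbouring cells of size `1/n`. -/
noncomputable def jumpCost (n : ℕ) (s : ℝ) : ℝ := Real.log (1 + (n * s) ^ 2) / n

/-- The fidelity, without the factor `β`, of the value `c` on the cell `[i/n, (i+1)/n)`. -/
noncomputable def cellFidelity (n : ℕ) (f : ℝ → ℝ) (i : ℕ) (c : ℝ) : ℝ :=
  ∫ x in (i : ℝ) / n..((i + 1 : ℕ) : ℝ) / n, (c - f x) ^ 2

/-- The energy of the window consisting of the cells `p, …, q - 1`, on which the function has the
values `U p, …, U (q - 1)`. The transitions between the window and its complement do not count. -/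
noncomputable def windowEnergy (n : ℕ) (β : ℝ) (f : ℝ → ℝ) (U : ℕ → ℝ) (p q : ℕ) : ℝ :=
  ∑ i ∈ Finset.Ico p (q - 1), jumpCost n (U (i + 1) - U i) +
    β * ∑ i ∈ Finset.Ico p q, cellFidelity n f i (U i)

/-- The cell values `U 0, …, U (n - 1)` minimize the discrete energy on `(0,1)`. -/
def IsDiscreteMinimizer (n : ℕ) (β : ℝ) (f : ℝ → ℝ) (U : ℕ → ℝ) : Prop :=
  ∀ V : ℕ → ℝ, windowEnergy n β f U 0 n ≤ windowEnergy n β f V 0 n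

lemma jumpCost_nonneg (n : ℕ) (s : ℝ) : 0 ≤ jumpCost n s :=
  div_nonneg (Real.log_nonneg (by linarith [sq_nonneg (n * s)])) n.cast_nonneg

lemma jumpCost_zero (n : ℕ) : jumpCost n 0 = 0 := by simp [jumpCost]

lemma natCast_div_le_natCast_div (n : ℕ) {i j : ℕ} (h : i ≤ j) : (i : ℝ) / n ≤ (j : ℝ) / n := by
  gcongr

lemma natCast_div_mem_Icc {n i : ℕ} (h : i ≤ n) : (i : ℝ) / n ∈ Icc (0 : ℝ) 1 :=
  ⟨by positivity, div_le_one_of_le₀ (by exact_mod_cast h) n.cast_nonneg⟩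

lemma Icc_natCast_div_subset {n p q : ℕ} (hq : q ≤ n) :
    Icc ((p : ℝ) / n) ((q : ℝ) / n) ⊆ Icc 0 1 :=
  Icc_subset_Icc (by positivity) (natCast_div_mem_Icc hq).2

lemma cellFidelity_nonneg (n : ℕ) (f : ℝ → ℝ) (i : ℕ) (c : ℝ) : 0 ≤ cellFidelity n f i c :=
  intervalIntegral.integral_nonneg (natCast_div_le_natCast_div n i.le_succ) fun _ _ => sq_nonneg _

lemma IsPC.eq_floor {n : ℕ} (hn : 0 < n) {u : ℝ → ℝ} (hu : IsPC (1 / (n : ℝ)) u) (x : ℝ) :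
    u x = u ((⌊(n : ℝ) * x⌋ : ℝ) / n) := by
  have hn' : (0 : ℝ) < n := Nat.cast_pos.2 hn
  have h := hu ⌊(n : ℝ) * x⌋ x
  simp only [mul_one_div] at h
  exact h ⟨(div_le_iff₀' hn').2 (Int.floor_le _), (lt_div_iff₀' hn').2 (Int.lt_floor_add_one _)⟩

lemma IsPC.eq_of_mem_cell {n : ℕ} {u : ℝ → ℝ} (hu : IsPC (1 / (n : ℝ)) u) (i : ℕ) {x : ℝ}
    (hx : x ∈ Ico ((i : ℝ) / n) (((i + 1 : ℕ) : ℝ) / n)) : u x = u ((i : ℝ) / n) := by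
  simpa only [Int.cast_natCast, mul_one_div] using
    hu i x (by simpa [div_eq_mul_inv] using hx)

lemma IsPC.measurable {n : ℕ} (hn : 0 < n) {u : ℝ → ℝ} (hu : IsPC (1 / (n : ℝ)) u) :
    Measurable u := by
  rw [show u = (fun z : ℤ => u ((z : ℝ) / n)) ∘ fun x => ⌊(n : ℝ) * x⌋ from
    funext (hu.eq_floor hn)]
  exact (measurable_of_countable _).comp (Int.measurable_floor.comp (measurable_const_mul _))

lemma isPC_comp_floor {n : ℕ} (hn : 0 < n) (V : ℤ → ℝ) :
    IsPC (1 / (n : ℝ)) fun x => V ⌊(n : ℝ) * x⌋ := by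
  have hn' : (0 : ℝ) < n := Nat.cast_pos.2 hn
  intro z x hx
  simp only [mul_one_div] at hx ⊢
  rw [mul_div_cancel₀ _ hn'.ne', Int.floor_intCast, Int.floor_eq_iff.2
    ⟨(div_le_iff₀' hn').1 hx.1, (lt_div_iff₀' hn').1 hx.2⟩]

lemma integral_eq_sum_cells (n m : ℕ) {g : ℝ → ℝ} {G : ℕ → ℝ → ℝ}
    (hG : ∀ i < m, IntervalIntegrable (G i) volume ((i : ℝ) / n) (((i + 1 : ℕ) : ℝ) / n))
    (hgG : ∀ i < m, EqOn g (G i) (Ioo ((i : ℝ) / n) (((i + 1 : ℕ) : ℝ) / n))) :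
    ∫ x in (0 : ℝ)..(m : ℝ) / n, g x =
      ∑ i ∈ Finset.Ico 0 m, ∫ x in (i : ℝ) / n..((i + 1 : ℕ) : ℝ) / n, G i x := by
  have hcell (i : ℕ) := natCast_div_le_natCast_div n i.le_succ
  have h := intervalIntegral.sum_integral_adjacent_intervals (f := g) (μ := volume)
    (a := fun i : ℕ => (i : ℝ) / n) (n := m) fun i hi =>
      (intervalIntegrable_congr_uIoo (by rw [uIoo_of_le (hcell i)]; exact hgG i hi)).2 (hG i hi)
  rw [← Finset.range_eq_Ico, ← Finset.sum_congr rfl fun i hi =>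
    intervalIntegral.integral_congr_Ioo_of_le (hcell i) (hgG i (Finset.mem_range.1 hi)), h]
  simp

section Cells

variable {n : ℕ} {f : ℝ → ℝ}

lemma intervalIntegrable_const_sub_sq {a b : ℝ} (hab : a ≤ b) (hf : ContinuousOn f (Icc a b))
    (c : ℝ) : IntervalIntegrable (fun x => (c - f x) ^ 2) volume a b :=
  ContinuousOn.intervalIntegrable (by rw [uIcc_of_le hab]; fun_prop)

lemma integral_log_eq_sum_jumpCost (hn : 0 < n) {u : ℝ → ℝ} (hu : IsPC (1 / (n : ℝ)) u) :
    ∫ x in (0 : ℝ)..((n - 1 : ℕ) : ℝ) / n, Real.log (1 + (Dd (1 / (n : ℝ)) u x) ^ 2) =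
      ∑ i ∈ Finset.Ico 0 (n - 1), jumpCost n (u (((i + 1 : ℕ) : ℝ) / n) - u ((i : ℝ) / n)) := by
  have : (0 : ℝ) < n := Nat.cast_pos.2 hn
  rw [integral_eq_sum_cells n (n - 1) (G := fun i _ =>
    Real.log (1 + (n * (u (((i + 1 : ℕ) : ℝ) / n) - u ((i : ℝ) / n))) ^ 2))]
  · refine Finset.sum_congr rfl fun i _ => ?_
    rw [intervalIntegral.integral_const, jumpCost, smul_eq_mul]
    push_cast
    field
  · exact fun i _ => intervalIntegrable_const
  · intro i _ x hx
    have hx' : x + 1 / n ∈ Ico (((i + 1 : ℕ) : ℝ) / n) (((i + 1 + 1 : ℕ) : ℝ) / n) := by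
      simp only [Nat.cast_add, Nat.cast_one, add_div, mem_Ioo, mem_Ico] at hx ⊢
      constructor <;> linarith [hx.1, hx.2]
    simp only [Dd, hu.eq_of_mem_cell i ⟨hx.1.le, hx.2⟩, hu.eq_of_mem_cell (i + 1) hx',
      div_div_eq_mul_div, div_one, mul_comm]

lemma DPMF_eq_windowEnergy (hn : 0 < n) (β : ℝ) (hf : ContinuousOn f (Icc 0 1)) {u : ℝ → ℝ}
    (hu : IsPC (1 / (n : ℝ)) u) :
    DPMF n β f 0 1 u = windowEnergy n β f (fun i => u ((i : ℝ) / n)) 0 n := by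
  have hn' : (n : ℝ) ≠ 0 := Nat.cast_ne_zero.2 hn.ne'
  have hlow : lowGrid (1 / (n : ℝ)) 0 = 0 := by simp [lowGrid]
  have hhigh : highGrid (1 / (n : ℝ)) 1 - 1 / (n : ℝ) = ((n - 1 : ℕ) : ℝ) / n := by
    simp only [highGrid, one_div_one_div, Int.ceil_natCast, Int.cast_natCast, Nat.cast_pred hn]
    field
  have hfid := integral_eq_sum_cells n n (g := fun x => (u x - f x) ^ 2)
    (G := fun i x => (u ((i : ℝ) / n) - f x) ^ 2)
    (fun i hi => intervalIntegrable_const_sub_sq (natCast_div_le_natCast_div n i.le_succ)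
      (hf.mono (Icc_natCast_div_subset hi)) _)
    (fun i _ x hx => by simp only [hu.eq_of_mem_cell i ⟨hx.1.le, hx.2⟩])
  rw [div_self hn'] at hfid
  rw [DPMF, hlow, hhigh, integral_log_eq_sum_jumpCost hn hu, hfid]
  rfl

lemma IsMinimizer.isDiscreteMinimizer (hn : 0 < n) {β : ℝ} (hf : ContinuousOn f (Icc 0 1))
    {u : ℝ → ℝ} (hu : IsMinimizer n β f u) :
    IsDiscreteMinimizer n β f fun i => u ((i : ℝ) / n) := by
  intro V
  have hV := isPC_comp_floor hn fun z => V z.toNat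
  have h := hu.2 _ hV
  rw [DPMF_eq_windowEnergy hn β hf hu.1, DPMF_eq_windowEnergy hn β hf hV] at h
  simpa [mul_div_cancel₀ _ (Nat.cast_ne_zero.2 hn.ne' : (n : ℝ) ≠ 0)] using h

lemma sum_cellFidelity_const {p q : ℕ} (hpq : p ≤ q)
    (hf : ContinuousOn f (Icc ((p : ℝ) / n) ((q : ℝ) / n))) (c : ℝ) :
    ∑ i ∈ Finset.Ico p q, cellFidelity n f i c =
      ∫ x in (p : ℝ) / n..(q : ℝ) / n, (c - f x) ^ 2 :=
  intervalIntegral.sum_integral_adjacent_intervals_Ico (a := fun i : ℕ => (i : ℝ) / n) hpq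
    fun _ hi => intervalIntegrable_const_sub_sq (natCast_div_le_natCast_div n (Nat.le_succ _))
      (hf.mono (Icc_subset_Icc (natCast_div_le_natCast_div n hi.1)
        (natCast_div_le_natCast_div n hi.2))) c

end Cells

section Window

variable {n : ℕ} {β : ℝ} {f : ℝ → ℝ} {U V : ℕ → ℝ} {p q r : ℕ}

lemma windowEnergy_mono (hβ : 0 ≤ β) {p' q' : ℕ} (hp : p ≤ p') (hq : q' ≤ q) :
    windowEnergy n β f U p' q' ≤ windowEnergy n β f U p q :=
  add_le_add
    (Finset.sum_le_sum_of_subset_of_nonneg (Finset.Ico_subset_Ico hp (by omega))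
      fun _ _ _ => jumpCost_nonneg _ _)
    (mul_le_mul_of_nonneg_left (Finset.sum_le_sum_of_subset_of_nonneg
      (Finset.Ico_subset_Ico hp hq) fun _ _ _ => cellFidelity_nonneg _ _ _ _) hβ)

lemma windowEnergy_congr (h : ∀ i ∈ Finset.Ico p q, U i = V i) :
    windowEnergy n β f U p q = windowEnergy n β f V p q := by
  simp only [Finset.mem_Ico] at h
  unfold windowEnergy
  congr 1
  · exact Finset.sum_congr rfl fun i hi => by
      rw [Finset.mem_Ico] at hi; rw [h i (by omega), h (i + 1) (by omega)]
  · rw [Finset.sum_congr rfl fun i hi => by rw [h i (Finset.mem_Ico.1 hi)]]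

lemma windowEnergy_eq_integral (hpq : p ≤ q)
    (hf : ContinuousOn f (Icc ((p : ℝ) / n) ((q : ℝ) / n))) {c : ℝ}
    (h : ∀ i ∈ Finset.Ico p q, U i = c) :
    windowEnergy n β f U p q = β * ∫ x in (p : ℝ) / n..(q : ℝ) / n, (c - f x) ^ 2 := by
  rw [windowEnergy_congr (V := fun _ => c) h, windowEnergy, sum_cellFidelity_const hpq hf]
  simp [jumpCost_zero]

lemma windowEnergy_eq_add (hpq : p < q) (hqr : q < r) :
    windowEnergy n β f U p r = windowEnergy n β f U p q + jumpCost n (U q - U (q - 1)) +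
      windowEnergy n β f U q r := by
  obtain ⟨q, rfl⟩ : ∃ q', q = q' + 1 := ⟨q - 1, by omega⟩
  unfold windowEnergy
  rw [← Finset.sum_Ico_consecutive _ hpq.le hqr.le,
    ← Finset.sum_Ico_consecutive _ hpq.le (by omega : q + 1 ≤ r - 1),
    Finset.sum_Ico_succ_top (Nat.le_of_lt_succ hpq) fun i => jumpCost n (U (i + 1) - U i)]
  simp only [Nat.add_sub_cancel]
  ring

lemma windowEnergy_eq_sum_blocks {b : ℕ → ℕ} {J : ℕ} (hb : ∀ j < J + 1, b j < b (j + 1)) :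
    windowEnergy n β f U (b 0) (b (J + 1)) =
      ∑ j ∈ Finset.range (J + 1), windowEnergy n β f U (b j) (b (j + 1)) +
        ∑ j ∈ Finset.range J, jumpCost n (U (b (j + 1)) - U (b (j + 1) - 1)) := by
  induction J with
  | zero => simp
  | succ J ih =>
    have hlt : b 0 < b (J + 1) := by
      have hmono : StrictMonoOn b (Iic (J + 1)) :=
        strictMonoOn_Iic_of_lt_succ fun j hj => hb j (by omega)
      exact hmono (mem_Iic.2 (Nat.zero_le _)) self_mem_Iic J.succ_pos
    rw [windowEnergy_eq_add hlt (hb _ (Nat.lt_succ_self _)), ih fun j hj => hb j (by omega),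
      Finset.sum_range_succ _ (J + 1),
      Finset.sum_range_succ (fun j => jumpCost n (U (b (j + 1)) - U (b (j + 1) - 1))) J]
    ring

lemma IsDiscreteMinimizer.windowEnergy_le (hU : IsDiscreteMinimizer n β f U) (hp : 0 < p)
    (hpq : p < q) (hq : q < n) (V : ℕ → ℝ) :
    windowEnergy n β f U p q ≤ windowEnergy n β f V p q + jumpCost n (V p - U (p - 1)) +
      jumpCost n (U q - V (q - 1)) := by
  set W : ℕ → ℝ := fun i => if p ≤ i ∧ i < q then V i else U i
  have hout (i : ℕ) (hi : i < p ∨ q ≤ i) : W i = U i := if_neg (by omega)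
  have hin (i : ℕ) (hp : p ≤ i) (hq : i < q) : W i = V i := if_pos ⟨hp, hq⟩
  have h := hU W
  rw [windowEnergy_eq_add (hp.trans hpq) hq, windowEnergy_eq_add hp hpq,
    windowEnergy_eq_add (U := W) (hp.trans hpq) hq, windowEnergy_eq_add (U := W) hp hpq,
    windowEnergy_congr (p := 0) fun i hi => hout i (.inl (Finset.mem_Ico.1 hi).2),
    windowEnergy_congr (p := q) fun i hi => hout i (.inr (Finset.mem_Ico.1 hi).1),
    windowEnergy_congr fun i hi => hin i (Finset.mem_Ico.1 hi).1 (Finset.mem_Ico.1 hi).2,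
    hin p le_rfl hpq, hout (p - 1) (by omega), hout q (by omega),
    hin (q - 1) (by omega) (by omega)] at h
  linarith [jumpCost_nonneg n (U p - U (p - 1)), jumpCost_nonneg n (U q - U (q - 1))]

end Window

/-! ### Asymptotics of transition costs -/

lemma natCast_mul_omg (n : ℕ) :
    (n : ℝ) * omg n = (n : ℝ) ^ (2 / 3 : ℝ) * Real.log n ^ (1 / 3 : ℝ) := by
  rcases n.eq_zero_or_pos with rfl | hn
  · simp
  have hn' : (0 : ℝ) < n := Nat.cast_pos.2 hn
  have h : (n : ℝ) ^ (2 / 3 : ℝ) * (n : ℝ) ^ (1 / 3 : ℝ) = n := by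
    rw [← Real.rpow_add hn']; norm_num
  have hne : (n : ℝ) ^ (1 / 3 : ℝ) ≠ 0 := (Real.rpow_pos_of_pos hn' _).ne'
  rw [omg, Real.div_rpow (Real.log_natCast_nonneg n) hn'.le, mul_div_assoc', div_eq_iff hne,
    mul_right_comm, h]

lemma omg_pow_three (n : ℕ) : omg n ^ 3 = Real.log n / n := by
  rw [omg, ← Real.rpow_natCast, ← Real.rpow_mul (by positivity)]
  norm_num

lemma omg_nonneg (n : ℕ) : 0 ≤ omg n := Real.rpow_nonneg (by positivity) _

lemma omg_pos {n : ℕ} (hn : 2 ≤ n) : 0 < omg n :=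
  Real.rpow_pos_of_pos (div_pos (Real.log_pos (by exact_mod_cast hn)) (by positivity)) _

lemma natCast_mul_omg_isLittleO {r : ℝ} (hr : 2 / 3 < r) :
    (fun n : ℕ => (n : ℝ) * omg n) =o[atTop] fun n : ℕ => (n : ℝ) ^ r := by
  have h := ((isLittleO_log_rpow_rpow_atTop (1 / 3) (sub_pos.2 hr)).comp_tendsto
    tendsto_natCast_atTop_atTop)
  refine ((Asymptotics.isBigO_refl (fun n : ℕ => (n : ℝ) ^ (2 / 3 : ℝ)) atTop).mul_isLittleO
    h).congr' (.of_eq (funext fun n => (natCast_mul_omg n).symm)) ?_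
  filter_upwards [eventually_gt_atTop 0] with n hn
  rw [Function.comp_apply, ← Real.rpow_add (Nat.cast_pos.2 hn)]
  ring_nf

lemma tendsto_natCast_mul_omg_atTop : Tendsto (fun n : ℕ => (n : ℝ) * omg n) atTop atTop := by
  simp only [natCast_mul_omg]
  exact ((tendsto_rpow_atTop (by norm_num)).comp tendsto_natCast_atTop_atTop).atTop_mul_atTop₀
    ((tendsto_rpow_atTop (by norm_num)).comp
      (Real.tendsto_log_atTop.comp tendsto_natCast_atTop_atTop))

lemma tendsto_omg : Tendsto omg atTop (nhds 0) := by
  refine (natCast_mul_omg_isLittleO (r := 1) (by norm_num)).tendsto_div_nhds_zero.congr' ?_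
  filter_upwards [eventually_ne_atTop 0] with n hn
  rw [Real.rpow_one, mul_div_cancel_left₀ _ (Nat.cast_ne_zero.2 hn)]

lemma jumpCost_le_iff {n : ℕ} (hn : 0 < n) (r s : ℝ) :
    jumpCost n s ≤ r * omg n ^ 3 ↔ 1 + (n * s) ^ 2 ≤ (n : ℝ) ^ r := by
  have hn' : (0 : ℝ) < n := Nat.cast_pos.2 hn
  rw [jumpCost, omg_pow_three, ← mul_div_assoc, div_le_div_iff_of_pos_right hn',
    Real.le_rpow_iff_log_le (by positivity) hn']

lemma le_jumpCost_iff {n : ℕ} (hn : 0 < n) (r s : ℝ) :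
    r * omg n ^ 3 ≤ jumpCost n s ↔ (n : ℝ) ^ r ≤ 1 + (n * s) ^ 2 := by
  have hn' : (0 : ℝ) < n := Nat.cast_pos.2 hn
  rw [jumpCost, omg_pow_three, ← mul_div_assoc, div_le_div_iff_of_pos_right hn',
    Real.rpow_le_iff_le_log hn' (by positivity)]

lemma eventually_jumpCost_le_of_isLittleO {r : ℝ} (hr : 0 < r) {h : ℕ → ℝ}
    (hh : (fun n : ℕ => (n * h n) ^ 2) =o[atTop] fun n : ℕ => (n : ℝ) ^ r) :
    ∀ᶠ n : ℕ in atTop, ∀ s : ℝ, |s| ≤ h n → jumpCost n s ≤ r * omg n ^ 3 := by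
  have hone : (fun _ : ℕ => (1 : ℝ)) =o[atTop] fun n : ℕ => (n : ℝ) ^ r :=
    Asymptotics.isLittleO_const_left.2 (.inr (tendsto_norm_atTop_atTop.comp
      ((tendsto_rpow_atTop hr).comp tendsto_natCast_atTop_atTop)))
  filter_upwards [(hone.add hh).bound one_pos, eventually_gt_atTop 0] with n hb hn s hs
  rw [one_mul, Real.norm_of_nonneg (by positivity), Real.norm_of_nonneg (by positivity)] at hb
  refine (jumpCost_le_iff hn r s).2 (le_trans ?_ hb)
  have : 0 ≤ h n := (abs_nonneg s).trans hs
  rw [mul_pow, mul_pow]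
  gcongr 1 + (n : ℝ) ^ 2 * ?_
  exact sq_le_sq' (abs_le.1 hs).1 (abs_le.1 hs).2

lemma eventually_jumpCost_le_of_abs_le_mul_omg (C : ℝ) {t : ℝ} (ht : 0 < t) :
    ∀ᶠ n : ℕ in atTop, ∀ s : ℝ, |s| ≤ C * omg n → jumpCost n s ≤ (4 / 3 + t) * omg n ^ 3 := by
  refine eventually_jumpCost_le_of_isLittleO (by linarith) ?_
  refine ((((natCast_mul_omg_isLittleO (r := 2 / 3 + t / 2) (by linarith)).const_mul_left
    C).pow two_pos).congr (fun n => by ring) fun n => ?_)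
  rw [← Real.rpow_mul_natCast n.cast_nonneg]
  ring_nf

lemma eventually_jumpCost_le_of_abs_le_mul_sqrt (C : ℝ) :
    ∀ᶠ n : ℕ in atTop, ∀ s : ℝ, |s| ≤ C * √n → jumpCost n s ≤ 4 * omg n ^ 3 := by
  refine eventually_jumpCost_le_of_isLittleO (by norm_num) ?_
  have h : (fun n : ℕ => C ^ 2 * (n : ℝ) ^ 3) =o[atTop] fun n : ℕ => (n : ℝ) ^ 4 :=
    (((Asymptotics.isLittleO_pow_pow_atTop_of_lt (by norm_num : 3 < 4)).comp_tendsto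
      tendsto_natCast_atTop_atTop).const_mul_left (C ^ 2))
  refine h.congr (fun n => ?_) fun n => by norm_cast
  rw [mul_pow, mul_pow, Real.sq_sqrt n.cast_nonneg]
  ring

/-- The slope `n ^ (2/3 (1 - t))` above which a transition counts as a jump. A jump of height of
order `ω(n)` has slope about `n ^ (2/3)`. -/
noncomputable def jumpSlope (n : ℕ) (t : ℝ) : ℝ := (n : ℝ) ^ (2 / 3 * (1 - t))

lemma jumpSlope_nonneg (n : ℕ) (t : ℝ) : 0 ≤ jumpSlope n t := by unfold jumpSlope; positivity

lemma le_jumpCost_of_jumpSlope_lt {n : ℕ} (hn : 0 < n) {t s : ℝ} (h : jumpSlope n t < n * |s|) :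
    (1 - t) * (4 / 3) * omg n ^ 3 ≤ jumpCost n s := by
  have hsq : jumpSlope n t ^ 2 = (n : ℝ) ^ ((1 - t) * (4 / 3)) := by
    rw [jumpSlope, ← Real.rpow_mul_natCast n.cast_nonneg]
    ring_nf
  rw [le_jumpCost_iff hn, ← hsq, ← sq_abs (n * s), abs_mul, Nat.abs_cast]
  linarith [pow_le_pow_left₀ (jumpSlope_nonneg n t) h.le 2]

lemma tendsto_jumpSlope_mul_omg_sq {t : ℝ} (ht : 0 < t) :
    Tendsto (fun n => jumpSlope n t * omg n ^ 2) atTop (nhds 0) := by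
  refine ((natCast_mul_omg_isLittleO (r := 2 / 3 + t / 3) (by linarith)).pow
    two_pos).tendsto_div_nhds_zero.congr' ?_
  filter_upwards [eventually_gt_atTop 0] with n hn
  have hn' : (0 : ℝ) < n := Nat.cast_pos.2 hn
  rw [← Real.rpow_mul_natCast hn'.le, div_eq_iff (Real.rpow_pos_of_pos hn' _).ne', jumpSlope,
    mul_right_comm, ← Real.rpow_add hn', mul_pow]
  norm_num
  ring_nf
  norm_num

lemma le_add_mul_log_one_add_sq {μ T x : ℝ} (hμ : 0 < μ) (hx : 0 ≤ x) (hxT : x ≤ T) :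
    x ≤ μ + (1 / (4 * μ) + T) * Real.log (1 + x ^ 2) := by
  have hT : 0 ≤ T := hx.trans hxT
  have hlog : x ^ 2 / (1 + x ^ 2) ≤ Real.log (1 + x ^ 2) := by
    refine le_trans (le_of_eq ?_) (Real.one_sub_inv_le_log_of_pos (by positivity : 0 < 1 + x ^ 2))
    field
  have hamgm : x ≤ μ + x ^ 2 / (4 * μ) := by
    rw [← sub_nonneg, show μ + x ^ 2 / (4 * μ) - x = (2 * μ - x) ^ 2 / (4 * μ) by field]
    positivity
  calc x ≤ μ + (1 / (4 * μ) + x) * (x ^ 2 / (1 + x ^ 2)) := by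
        rw [← sub_le_iff_le_add', mul_div_assoc', le_div_iff₀ (by positivity)]
        linear_combination hamgm + mul_nonneg hμ.le (sq_nonneg x)
    _ ≤ μ + (1 / (4 * μ) + T) * Real.log (1 + x ^ 2) := by gcongr

lemma natCast_mul_sum_abs_le {n : ℕ} (hn : 0 < n) {μ T : ℝ} (hμ : 0 < μ) {I : Finset ℕ}
    {d : ℕ → ℝ} (hd : ∀ i ∈ I, n * |d i| ≤ T) :
    n * ∑ i ∈ I, |d i| ≤ I.card * μ + (1 / (4 * μ) + T) * (n * ∑ i ∈ I, jumpCost n (d i)) := by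
  have hcard : (I.card : ℝ) * μ = ∑ _i ∈ I, μ := by simp
  rw [hcard, Finset.mul_sum, Finset.mul_sum, Finset.mul_sum, ← Finset.sum_add_distrib]
  refine Finset.sum_le_sum fun i hi => ?_
  have h := le_add_mul_log_one_add_sq hμ (by positivity) (hd i hi)
  rwa [mul_pow, sq_abs, ← mul_pow, ← mul_div_cancel₀ (Real.log _)
    (Nat.cast_ne_zero.2 hn.ne' : (n : ℝ) ≠ 0)] at h

lemma eventually_sum_abs_le_mul_omg {A E t s : ℝ} (hA : 0 < A) (ht : 0 < t) (hs : 0 < s) :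
    ∀ᶠ n : ℕ in atTop, ∀ (I : Finset ℕ) (d : ℕ → ℝ), (I.card : ℝ) ≤ A * (n * omg n) →
      (∀ i ∈ I, n * |d i| ≤ jumpSlope n t) → ∑ i ∈ I, jumpCost n (d i) ≤ E * omg n ^ 3 →
      ∑ i ∈ I, |d i| ≤ s * omg n := by
  set μ := s / (2 * A)
  have hμ : 0 < μ := by positivity
  have hAμ : A * μ = s / 2 := by simp only [μ]; field
  have hlim : Tendsto (fun n => E / (4 * μ) * omg n ^ 2 + E * (jumpSlope n t * omg n ^ 2)) atTop
      (nhds 0) := by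
    simpa using ((tendsto_omg.pow 2).const_mul (E / (4 * μ))).add
      ((tendsto_jumpSlope_mul_omg_sq ht).const_mul E)
  filter_upwards [hlim.eventually (gt_mem_nhds (half_pos hs)), eventually_gt_atTop 0]
    with n hsmall hn I d hcard hd hcost
  have hn' : (0 : ℝ) < n := Nat.cast_pos.2 hn
  have hω := omg_nonneg n
  have hT := jumpSlope_nonneg n t
  refine le_of_mul_le_mul_left ?_ hn'
  calc n * ∑ i ∈ I, |d i|
      ≤ I.card * μ + (1 / (4 * μ) + jumpSlope n t) * (n * ∑ i ∈ I, jumpCost n (d i)) :=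
        natCast_mul_sum_abs_le hn hμ hd
    _ ≤ A * (n * omg n) * μ + (1 / (4 * μ) + jumpSlope n t) * (n * (E * omg n ^ 3)) := by gcongr
    _ = (A * μ + (E / (4 * μ) * omg n ^ 2 + E * (jumpSlope n t * omg n ^ 2))) * (n * omg n) := by
        ring
    _ ≤ s * (n * omg n) := by gcongr; linarith
    _ = n * (s * omg n) := by ring

/-! ### Upper bound for the energy of a minimizer in a window -/

section SupBound

variable {n : ℕ} {f : ℝ → ℝ}

lemma sq_div_le_cellFidelity {i : ℕ} (hi : i < n) (hf : ContinuousOn f (Icc 0 1)) {c δ : ℝ}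
    (hδ : 0 ≤ δ) (h : ∀ x ∈ Icc (0 : ℝ) 1, δ ≤ |c - f x|) : δ ^ 2 / n ≤ cellFidelity n f i c := by
  have hle := natCast_div_le_natCast_div n i.le_succ
  have hsub : Icc ((i : ℝ) / n) (((i + 1 : ℕ) : ℝ) / n) ⊆ Icc 0 1 := Icc_natCast_div_subset hi
  calc δ ^ 2 / n = ∫ _ in (i : ℝ) / n..((i + 1 : ℕ) : ℝ) / n, δ ^ 2 := by
        rw [intervalIntegral.integral_const, smul_eq_mul]; push_cast; ring
    _ ≤ cellFidelity n f i c :=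
        intervalIntegral.integral_mono_on hle intervalIntegrable_const
          (intervalIntegrable_const_sub_sq hle (hf.mono hsub) c) fun x hx => by
            rw [← sq_abs (c - f x)]; exact pow_le_pow_left₀ hδ (h x (hsub hx)) 2

lemma windowEnergy_zero_le (hn : 0 < n) {β F : ℝ} (hβ : 0 ≤ β) (hf : ContinuousOn f (Icc 0 1))
    (hF : ∀ x ∈ Icc (0 : ℝ) 1, |f x| ≤ F) : windowEnergy n β f (fun _ => 0) 0 n ≤ β * F ^ 2 := by
  have hend : (n : ℝ) / n = 1 := div_self (Nat.cast_ne_zero.2 hn.ne')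
  rw [windowEnergy_eq_integral n.zero_le (c := 0) (by simpa [hend] using hf) fun _ _ => rfl]
  simp only [Nat.cast_zero, zero_div, hend, zero_sub, neg_sq]
  gcongr
  calc ∫ x in (0 : ℝ)..1, f x ^ 2 ≤ ∫ _ in (0 : ℝ)..1, F ^ 2 :=
        intervalIntegral.integral_mono_on zero_le_one
          ((hf.pow 2).intervalIntegrable_of_Icc zero_le_one) intervalIntegrable_const
          fun x hx => sq_le_sq' (abs_le.1 (hF x hx)).1 (abs_le.1 (hF x hx)).2
    _ = F ^ 2 := by simp

lemma cellFidelity_le_windowEnergy {β : ℝ} (hβ : 0 ≤ β) {U : ℕ → ℝ} {i p q : ℕ}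
    (hi : i ∈ Finset.Ico p q) : β * cellFidelity n f i (U i) ≤ windowEnergy n β f U p q := by
  refine le_add_of_nonneg_of_le (Finset.sum_nonneg fun _ _ => jumpCost_nonneg _ _) ?_
  gcongr
  exact Finset.single_le_sum (f := fun i => cellFidelity n f i (U i))
    (fun _ _ => cellFidelity_nonneg _ _ _ _) hi

lemma IsDiscreteMinimizer.abs_le {β F : ℝ} (hβ : 0 < β) (hf : ContinuousOn f (Icc 0 1))
    (hF : ∀ x ∈ Icc (0 : ℝ) 1, |f x| ≤ F) {U : ℕ → ℝ} (hU : IsDiscreteMinimizer n β f U) {i : ℕ}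
    (hi : i < n) : |U i| ≤ 2 * F * √n := by
  have hn : 0 < n := i.zero_le.trans_lt hi
  have hF0 : 0 ≤ F := (abs_nonneg _).trans (hF 0 (by simp))
  have hsqrt : 1 ≤ √(n : ℝ) := Real.one_le_sqrt.2 (by exact_mod_cast hn)
  rcases le_total (|U i|) F with h | h
  · nlinarith
  have hcell : cellFidelity n f i (U i) ≤ F ^ 2 :=
    le_of_mul_le_mul_left ((cellFidelity_le_windowEnergy hβ.le (by simpa using hi)).trans
      ((hU _).trans (windowEnergy_zero_le hn hβ.le hf hF))) hβ
  have hlow := sq_div_le_cellFidelity hi hf (c := U i) (δ := |U i| - F) (sub_nonneg.2 h)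
    fun x hx => by linarith [hF x hx, abs_sub_abs_le_abs_sub (U i) (f x)]
  have hsq : |U i| - F ≤ F * √n := by
    rw [← Real.sqrt_sq hF0, ← Real.sqrt_mul (sq_nonneg F)]
    refine Real.le_sqrt_of_sq_le ?_
    rw [Real.sqrt_sq hF0]
    exact (div_le_iff₀ (Nat.cast_pos.2 hn)).1 (hlow.trans hcell)
  nlinarith

end SupBound

/-- The midpoint of the block consisting of the cells `a, …, b - 1`. -/
noncomputable def blockMid (n a b : ℕ) : ℝ := ((a : ℝ) / n + b / n) / 2

lemma blockMid_mem_Icc (n : ℕ) {a b : ℕ} (hab : a ≤ b) :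
    blockMid n a b ∈ Icc ((a : ℝ) / n) ((b : ℝ) / n) := by
  have := natCast_div_le_natCast_div n hab
  constructor <;> unfold blockMid <;> linarith

lemma integral_const_sub_linear_sq (a b c M : ℝ) :
    ∫ x in a..b, (c - M * (x - (a + b) / 2)) ^ 2 =
      M ^ 2 * ((b - a) ^ 3 / 12) + (b - a) * c ^ 2 := by
  set m := (a + b) / 2 with hm
  have hderiv (x : ℝ) : HasDerivAt
      (fun x => M ^ 2 * ((x - m) ^ 3 / 3) - c * M * (x - m) ^ 2 + c ^ 2 * x)
      ((c - M * (x - m)) ^ 2) x := by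
    have h := (hasDerivAt_id x).sub_const m
    refine (((((h.pow 3).div_const 3).const_mul (M ^ 2)).sub ((h.pow 2).const_mul (c * M))).add
      ((hasDerivAt_id x).const_mul (c ^ 2))).congr_deriv ?_
    simp only [id]
    push_cast
    ring
  rw [intervalIntegral.integral_eq_sub_of_hasDerivAt (fun x _ => hderiv x)
    (Continuous.intervalIntegrable (by fun_prop) _ _), hm]
  ring

lemma integral_midpoint_sub_sq_le {f : ℝ → ℝ} {K : NNReal} {a b : ℝ} (hab : a ≤ b)
    (hf : LipschitzOnWith K f (Icc a b)) :
    ∫ x in a..b, (f ((a + b) / 2) - f x) ^ 2 ≤ K ^ 2 * ((b - a) ^ 3 / 12) := by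
  have hmid : (a + b) / 2 ∈ Icc a b := ⟨by linarith, by linarith⟩
  calc ∫ x in a..b, (f ((a + b) / 2) - f x) ^ 2
      ≤ ∫ x in a..b, (0 - K * (x - (a + b) / 2)) ^ 2 := by
        refine intervalIntegral.integral_mono_on hab
          (intervalIntegrable_const_sub_sq hab hf.continuousOn _)
          (Continuous.intervalIntegrable (by fun_prop) _ _) fun x hx => ?_
        rw [zero_sub, neg_sq, mul_pow, ← sq_abs, ← sq_abs (x - (a + b) / 2), ← mul_pow,
          abs_sub_comm]
        exact pow_le_pow_left₀ (abs_nonneg _) (hf.dist_le_mul x hx _ hmid) 2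
    _ = K ^ 2 * ((b - a) ^ 3 / 12) := by rw [integral_const_sub_linear_sq]; ring

/-- The cell values of the step function with blocks of `m` cells, the first one starting at the
cell `p`, that takes on each block the value of `f` at the midpoint of the block. -/
noncomputable def blockApprox (n : ℕ) (f : ℝ → ℝ) (p m i : ℕ) : ℝ :=
  f (blockMid n (p + (i - p) / m * m) (p + ((i - p) / m + 1) * m))

section UpperBound

variable {n p m : ℕ} {β : ℝ} {f : ℝ → ℝ}

lemma blockApprox_of_mem {i j : ℕ} (hi : i ∈ Finset.Ico (p + j * m) (p + (j + 1) * m)) :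
    blockApprox n f p m i = f (blockMid n (p + j * m) (p + (j + 1) * m)) := by
  rw [Finset.mem_Ico] at hi
  have hdiv : (i - p) / m = j := Nat.div_eq_of_lt_le (by omega) (by omega)
  rw [blockApprox, hdiv]

lemma windowEnergy_blockApprox_le (hβ : 0 ≤ β) (hm : 0 < m) {N : ℕ} {K : NNReal} {Cj : ℝ}
    (hf : LipschitzOnWith K f (Icc ((p : ℝ) / n) (((p + (N + 1) * m : ℕ) : ℝ) / n)))
    (hCj : ∀ s, |s| ≤ K * ((m : ℝ) / n) → jumpCost n s ≤ Cj) :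
    windowEnergy n β f (blockApprox n f p m) p (p + (N + 1) * m) ≤
      (N + 1) * (β * (K ^ 2 * (((m : ℝ) / n) ^ 3 / 12))) + N * Cj := by
  set b : ℕ → ℕ := fun j => p + j * m with hb
  have hlt (j : ℕ) : b j < b (j + 1) := by simp only [hb, add_mul]; omega
  have hlen (j : ℕ) : (b (j + 1) : ℝ) / n - (b j : ℝ) / n = m / n := by
    simp only [hb]; push_cast; ring
  have hsub {j : ℕ} (hj : j < N + 1) : Icc ((b j : ℝ) / n) ((b (j + 1) : ℝ) / n) ⊆
      Icc ((p : ℝ) / n) (((p + (N + 1) * m : ℕ) : ℝ) / n) := by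
    refine Icc_subset_Icc (natCast_div_le_natCast_div n (Nat.le_add_right _ _))
      (natCast_div_le_natCast_div n ?_)
    simp only [hb]; gcongr; omega
  have hblock (j : ℕ) (hj : j < N + 1) :
      windowEnergy n β f (blockApprox n f p m) (b j) (b (j + 1)) ≤
        β * (K ^ 2 * (((m : ℝ) / n) ^ 3 / 12)) := by
    rw [windowEnergy_eq_integral (hlt j).le (hf.continuousOn.mono (hsub hj))
      fun i hi => blockApprox_of_mem hi, ← hlen j]
    gcongr
    exact integral_midpoint_sub_sq_le (natCast_div_le_natCast_div n (hlt j).le) (hf.mono (hsub hj))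
  have hjump (j : ℕ) (hj : j < N) :
      jumpCost n (blockApprox n f p m (b (j + 1)) - blockApprox n f p m (b (j + 1) - 1)) ≤ Cj := by
    have hj1 := hlt j
    have hj2 := hlt (j + 1)
    have hmid : blockMid n (b (j + 1)) (b (j + 2)) - blockMid n (b j) (b (j + 1)) = m / n := by
      unfold blockMid; linarith [hlen j, hlen (j + 1)]
    rw [blockApprox_of_mem (j := j + 1) (Finset.mem_Ico.2 ⟨le_rfl, hj2⟩),
      blockApprox_of_mem (j := j)
        (Finset.mem_Ico.2 ⟨Nat.le_sub_one_of_lt hj1, Nat.sub_one_lt_of_lt hj1⟩)]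
    refine hCj _ ((hf.dist_le_mul _ (hsub (by omega) (blockMid_mem_Icc n hj2.le)) _
      (hsub (by omega) (blockMid_mem_Icc n hj1.le))).trans_eq ?_)
    rw [Real.dist_eq, hmid, abs_of_nonneg (by positivity)]
  have h := windowEnergy_eq_sum_blocks (n := n) (β := β) (f := f) (U := blockApprox n f p m)
    (J := N) fun j _ => hlt j
  rw [show b 0 = p by simp [hb]] at h
  refine (h.trans_le (add_le_add
    (Finset.sum_le_sum fun j hj => hblock j (Finset.mem_range.1 hj))
    (Finset.sum_le_sum fun j hj => hjump j (Finset.mem_range.1 hj)))).trans_eq ?_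
  simp

lemma abs_blockApprox_le {N i : ℕ} (hpn : p + N * m ≤ n) {F : ℝ}
    (hF : ∀ x ∈ Icc (0 : ℝ) 1, |f x| ≤ F) (hi : i < p + N * m) (hp : p ≤ i) :
    |blockApprox n f p m i| ≤ F := by
  refine hF _ (Icc_natCast_div_subset ?_ (blockMid_mem_Icc n ?_))
  · have hj : (i - p) / m + 1 ≤ N := Nat.div_lt_of_lt_mul (by rw [mul_comm]; omega)
    exact (Nat.add_le_add_left (Nat.mul_le_mul_right m hj) p).trans hpn
  · gcongr; omega

end UpperBound

/-- The number of cells in a block of length `A ω(n)`, rounded down. -/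
noncomputable def blockLen (A : ℝ) (n : ℕ) : ℕ := ⌊A * (n * omg n)⌋₊

/-- The first cell of the window of `N` blocks of length about `A ω(n)` that ends at `k n`. -/
noncomputable def windowStart (k : ℕ → ℕ) (A : ℝ) (N n : ℕ) : ℕ := k n - N * blockLen A n

/-- On the set `s` the function `f` has slope `M` up to an error `η` in its increments. -/
def NearAffineOn (f : ℝ → ℝ) (M : ℝ) (s : Set ℝ) (η : ℝ) : Prop :=
  ∀ x ∈ s, ∀ y ∈ s, |f x - f y - M * (x - y)| ≤ η

lemma NearAffineOn.mono {f : ℝ → ℝ} {M η : ℝ} {s t : Set ℝ} (h : NearAffineOn f M t η)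
    (hst : s ⊆ t) : NearAffineOn f M s η :=
  fun x hx y hy => h x (hst hx) y (hst hy)

lemma blockLen_div_le {A : ℝ} (hA : 0 ≤ A) (n : ℕ) : (blockLen A n : ℝ) / n ≤ A * omg n := by
  rcases n.eq_zero_or_pos with rfl | hn
  · simpa using mul_nonneg hA (omg_nonneg 0)
  have hω := omg_nonneg n
  rw [div_le_iff₀ (Nat.cast_pos.2 hn)]
  exact (Nat.floor_le (by positivity)).trans_eq (by ring)

lemma mul_omg_sub_le_blockLen_div (A : ℝ) {n : ℕ} (hn : 0 < n) :
    A * omg n - 1 / n ≤ (blockLen A n : ℝ) / n := by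
  have h := Nat.lt_floor_add_one (A * (n * omg n))
  rw [sub_le_iff_le_add, ← add_div, le_div_iff₀ (Nat.cast_pos.2 hn)]
  calc A * omg n * n = A * (n * omg n) := by ring
    _ ≤ blockLen A n + 1 := h.le

lemma eventually_blockLen_pos {A : ℝ} (hA : 0 < A) : ∀ᶠ n : ℕ in atTop, 0 < blockLen A n := by
  filter_upwards [(tendsto_natCast_mul_omg_atTop.const_mul_atTop hA).eventually_ge_atTop 1]
    with n hn using Nat.floor_pos.2 hn

lemma tendsto_blockLen_div {A : ℝ} (hA : 0 ≤ A) :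
    Tendsto (fun n => (blockLen A n : ℝ) / n) atTop (nhds 0) :=
  squeeze_zero (fun n => by positivity) (blockLen_div_le hA)
    (by simpa using tendsto_omg.const_mul A)

section Asymptotics

variable {β M xinf A : ℝ} {f : ℝ → ℝ} {k : ℕ → ℕ} {N : ℕ}

lemma eventually_lt_of_tendsto_div (hx : Tendsto (fun n => (k n : ℝ) / n) atTop (nhds xinf))
    (hxinf : xinf < 1) : ∀ᶠ n in atTop, k n < n := by
  filter_upwards [hx.eventually_lt_const hxinf, eventually_gt_atTop 0] with n h hn
  rw [div_lt_one (Nat.cast_pos.2 hn)] at h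
  exact_mod_cast h

lemma eventually_mul_blockLen_lt (hx : Tendsto (fun n => (k n : ℝ) / n) atTop (nhds xinf))
    (hxinf : 0 < xinf) (hA : 0 ≤ A) (N : ℕ) : ∀ᶠ n in atTop, N * blockLen A n < k n := by
  have h0 : Tendsto (fun n => (N : ℝ) * ((blockLen A n : ℝ) / n)) atTop (nhds 0) := by
    simpa using (tendsto_blockLen_div hA).const_mul (N : ℝ)
  filter_upwards [h0.eventually_lt hx hxinf, eventually_gt_atTop 0] with n h hn
  rw [← mul_div_assoc, div_lt_div_iff_of_pos_right (Nat.cast_pos.2 hn)] at h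
  exact_mod_cast h

lemma div_sub_windowStart_div {n : ℕ} (h : N * blockLen A n ≤ k n) :
    (k n : ℝ) / n - (windowStart k A N n : ℝ) / n = N * ((blockLen A n : ℝ) / n) := by
  rw [windowStart, Nat.cast_sub h]
  push_cast
  ring

lemma tendsto_windowStart_div (hx : Tendsto (fun n => (k n : ℝ) / n) atTop (nhds xinf))
    (hxinf : 0 < xinf) (hA : 0 ≤ A) (N : ℕ) :
    Tendsto (fun n => (windowStart k A N n : ℝ) / n) atTop (nhds xinf) := by
  have h : Tendsto (fun n => (k n : ℝ) / n - N * ((blockLen A n : ℝ) / n)) atTop (nhds xinf) := by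
    simpa using hx.sub ((tendsto_blockLen_div hA).const_mul (N : ℝ))
  refine h.congr' ?_
  filter_upwards [eventually_mul_blockLen_lt hx hxinf hA N] with n hn
  rw [← div_sub_windowStart_div hn.le, sub_sub_cancel]

lemma eventually_Icc_window_subset (hx : Tendsto (fun n => (k n : ℝ) / n) atTop (nhds xinf))
    (hxinf : 0 < xinf) (hA : 0 ≤ A) (N : ℕ) {s : Set ℝ} (hs : s ∈ nhds xinf) :
    ∀ᶠ n in atTop, Icc ((windowStart k A N n : ℝ) / n) ((k n : ℝ) / n) ⊆ s :=
  tendsto_smallSets_iff.1 ((tendsto_windowStart_div hx hxinf hA N).Icc hx) s hs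

lemma exists_mem_nhds_abs_sub_sub_le (hf : HasStrictDerivAt f M xinf) {ε : ℝ} (hε : 0 < ε) :
    ∃ s ∈ nhds xinf, ∀ x ∈ s, ∀ y ∈ s, |f x - f y - M * (x - y)| ≤ ε * |x - y| := by
  have h := hf.isLittleO.bound hε
  rw [nhds_prod_eq, eventually_prod_self_iff'] at h
  obtain ⟨s, hs, h⟩ := h
  exact ⟨s, hs, fun x hx y hy => by simpa [mul_comm] using h x hx y hy⟩

lemma eventually_nearAffineOn_window (hf : HasStrictDerivAt f M xinf) (hxinf : 0 < xinf)
    (hx : Tendsto (fun n => (k n : ℝ) / n) atTop (nhds xinf)) (hA : 0 ≤ A) (N : ℕ) {t : ℝ}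
    (ht : 0 < t) : ∀ᶠ n in atTop,
      NearAffineOn f M (Icc ((windowStart k A N n : ℝ) / n) ((k n : ℝ) / n)) (t * omg n) := by
  obtain ⟨s, hs, h⟩ := exists_mem_nhds_abs_sub_sub_le hf (ε := t / (N * A + 1)) (by positivity)
  filter_upwards [eventually_Icc_window_subset hx hxinf hA N hs,
    eventually_mul_blockLen_lt hx hxinf hA N] with n hn hNk x hx y hy
  have hω := omg_nonneg n
  have hxy : |x - y| ≤ (N * A + 1) * omg n := by
    have hlen := div_sub_windowStart_div hNk.le
    have hblock := mul_le_mul_of_nonneg_left (blockLen_div_le hA n) N.cast_nonneg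
    exact abs_le.2 (by constructor <;> linarith [hx.1, hx.2, hy.1, hy.2])
  calc |f x - f y - M * (x - y)| ≤ t / (N * A + 1) * |x - y| := h x (hn hx) y (hn hy)
    _ ≤ t / (N * A + 1) * ((N * A + 1) * omg n) := by gcongr
    _ = t * omg n := by field

lemma IsDiscreteMinimizer.windowEnergy_le_blocks {n p m : ℕ} {U : ℕ → ℝ}
    (hU : IsDiscreteMinimizer n β f U) (hβ : 0 < β) (hf : ContinuousOn f (Icc 0 1)) {F : ℝ}
    (hF : ∀ x ∈ Icc (0 : ℝ) 1, |f x| ≤ F) {K : NNReal} (hp : 0 < p) (hm : 0 < m)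
    (hn : p + (N + 1) * m < n)
    (hK : LipschitzOnWith K f (Icc ((p : ℝ) / n) (((p + (N + 1) * m : ℕ) : ℝ) / n))) {Cj Ce : ℝ}
    (hCj : ∀ s, |s| ≤ K * ((m : ℝ) / n) → jumpCost n s ≤ Cj)
    (hCe : ∀ s, |s| ≤ 3 * F * √n → jumpCost n s ≤ Ce) :
    windowEnergy n β f U p (p + (N + 1) * m) ≤
      (N + 1) * (β * (K ^ 2 * (((m : ℝ) / n) ^ 3 / 12))) + N * Cj + Ce + Ce := by
  have hpos : 0 < (N + 1) * m := by positivity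
  have hF0 : 0 ≤ F := (abs_nonneg _).trans (hF 0 (by simp))
  have hdiff {i j : ℕ} (hip : p ≤ i) (hi : i < p + (N + 1) * m) (hj : j < n) :
      |blockApprox n f p m i| + |U j| ≤ 3 * F * √n := by
    have hsqrt : 1 ≤ √(n : ℝ) := Real.one_le_sqrt.2 (by exact_mod_cast j.zero_le.trans_lt hj)
    linarith [abs_blockApprox_le hn.le hF hi hip, hU.abs_le hβ hf hF hj,
      le_mul_of_one_le_right hF0 hsqrt]
  refine (hU.windowEnergy_le hp (by omega) hn (blockApprox n f p m)).trans ?_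
  gcongr
  · exact windowEnergy_blockApprox_le hβ.le hm hK hCj
  · exact hCe _ ((abs_sub _ _).trans (hdiff le_rfl (by omega) (by omega)))
  · exact hCe _ ((abs_sub_comm _ _).trans_le ((abs_sub _ _).trans (hdiff (by omega) (by omega) hn)))

lemma exists_lipschitzOnWith_and_lt {x c : ℝ} (hM : HasStrictDerivAt f M x) {g : NNReal → ℝ}
    (hg : ContinuousAt g ‖M‖₊) (hc : g ‖M‖₊ < c) :
    ∃ K, g K < c ∧ ∃ s ∈ nhds x, LipschitzOnWith K f s := by
  have hlt : ∀ᶠ K in nhdsWithin ‖M‖₊ (Ioi ‖M‖₊), g K < c :=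
    nhdsWithin_le_nhds (hg.eventually_lt_const hc)
  obtain ⟨K, hK, hMK⟩ := (hlt.and self_mem_nhdsWithin).exists
  exact ⟨K, hK, hM.hasStrictFDerivAt.exists_lipschitzOnWith_of_nnnorm_lt K (by simpa using hMK)⟩

lemma eventually_windowEnergy_le (hβ : 0 < β) (hf : ContinuousOn f (Icc 0 1))
    (hM : HasStrictDerivAt f M xinf) (hxinf : xinf ∈ Ioo (0 : ℝ) 1)
    (hx : Tendsto (fun n => (k n : ℝ) / n) atTop (nhds xinf)) {U : ℕ → ℕ → ℝ}
    (hU : ∀ᶠ n in atTop, IsDiscreteMinimizer n β f (U n)) (hA : 0 < A) (hN : 0 < N) :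
    ∀ᶠ n in atTop, windowEnergy n β f (U n) (windowStart k A N n) (k n) ≤
      (N * (4 / 3 + β * M ^ 2 * A ^ 3 / 12) + 9) * omg n ^ 3 := by
  obtain ⟨N, rfl⟩ := Nat.exists_eq_succ_of_ne_zero hN.ne'
  obtain ⟨F, hF⟩ := isCompact_Icc.exists_bound_of_continuousOn hf
  obtain ⟨K, hKlt, s, hs, hlip⟩ := exists_lipschitzOnWith_and_lt hM
    (g := fun K => (N + 1) * (β * (K : ℝ) ^ 2 * A ^ 3 / 12))
    (c := (N + 1) * (β * M ^ 2 * A ^ 3 / 12) + 1 / 2) (by fun_prop) (by simp)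
  filter_upwards [hU, eventually_blockLen_pos hA, eventually_lt_of_tendsto_div hx hxinf.2,
    eventually_mul_blockLen_lt hx hxinf.1 hA.le (N + 1),
    eventually_Icc_window_subset hx hxinf.1 hA.le (N + 1) hs,
    eventually_jumpCost_le_of_abs_le_mul_omg (K * A) (t := 1 / (2 * (N + 1))) (by positivity),
    eventually_jumpCost_le_of_abs_le_mul_sqrt (3 * F)] with n hU hm hkn hNk hsub hjump hend
  have hend_eq : windowStart k A (N + 1) n + (N + 1) * blockLen A n = k n :=
    Nat.sub_add_cancel hNk.le
  have hlen := blockLen_div_le hA.le n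
  have hω := omg_nonneg n
  have h := hU.windowEnergy_le_blocks (p := windowStart k A (N + 1) n) hβ hf hF
    (Nat.sub_pos_of_lt hNk) hm (hend_eq.trans_lt hkn)
    (hlip.mono (by rwa [hend_eq])) (fun s hs => hjump s (hs.trans ?_)) hend
  · rw [hend_eq] at h
    push_cast
    calc windowEnergy n β f (U n) (windowStart k A (N + 1) n) (k n)
        ≤ (N + 1) * (β * (K ^ 2 * ((A * omg n) ^ 3 / 12))) +
          (N + 1) * ((4 / 3 + 1 / (2 * (N + 1))) * omg n ^ 3) + 8 * omg n ^ 3 := by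
          refine h.trans ?_
          have hcube : β * (K ^ 2 * (((blockLen A n : ℝ) / n) ^ 3 / 12)) ≤
            β * (K ^ 2 * ((A * omg n) ^ 3 / 12)) := by gcongr
          have hcost : 0 ≤ (4 / 3 + 1 / (2 * ((N : ℝ) + 1))) * omg n ^ 3 := by positivity
          nlinarith
      _ = ((N + 1) * (β * K ^ 2 * A ^ 3 / 12) + (N + 1) * (4 / 3) + 17 / 2) * omg n ^ 3 := by field
      _ ≤ ((N + 1) * (4 / 3 + β * M ^ 2 * A ^ 3 / 12) + 9) * omg n ^ 3 :=
          mul_le_mul_of_nonneg_right (by linarith) (by positivity)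
  · rw [mul_assoc]; gcongr

end Asymptotics

/-! ### Cutting a window at its large jumps -/

/-- The points `b 0 < b 1 < … < b J` cut the cells `b 0, …, b J - 1` into `J` pieces, exactly at
the points strictly between `b 0` and `b J` where `P` holds. -/
structure Breaks (P : ℕ → Prop) (J : ℕ) (b : ℕ → ℕ) : Prop where
  strictMonoOn : StrictMonoOn b (Iic J)
  not_of_mem_Ioo : ∀ j < J, ∀ i ∈ Ioo (b j) (b (j + 1)), ¬P i
  of_interior : ∀ j, 0 < j → j < J → P (b j)

/-- The transition from cell `i - 1` to cell `i` is large: its slope exceeds the threshold. -/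
def LargeJump (n : ℕ) (t : ℝ) (U : ℕ → ℝ) (i : ℕ) : Prop :=
  jumpSlope n t < n * |U i - U (i - 1)|

open Classical in
/-- The transitions inside the window of the cells `p, …, q - 1` that are not large, labelled by
the cell at which they start. -/
noncomputable def smallJumps (n : ℕ) (t : ℝ) (U : ℕ → ℝ) (p q : ℕ) : Finset ℕ :=
  {i ∈ Finset.Ico p (q - 1) | ¬LargeJump n t U (i + 1)}

/-- The total variation of `U` carried by the small transitions inside the window. -/
noncomputable def smallVar (n : ℕ) (t : ℝ) (U : ℕ → ℝ) (p q : ℕ) : ℝ :=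
  ∑ i ∈ smallJumps n t U p q, |U (i + 1) - U i|

section Breaks

variable {P : ℕ → Prop} {J : ℕ} {b : ℕ → ℕ}

lemma exists_breaks (P : ℕ → Prop) {p q : ℕ} (hpq : p < q) :
    ∃ J b, Breaks P (J + 1) b ∧ b 0 = p ∧ b (J + 1) = q := by
  induction h : q - p using Nat.strong_induction_on generalizing p with
  | _ m ih =>
  classical
  by_cases hP : ∃ i, i ∈ Ioo p q ∧ P i
  · obtain ⟨hr, hPr⟩ := Nat.find_spec hP
    have hmin (i : ℕ) (hi : i < Nat.find hP) := Nat.find_min hP hi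
    generalize Nat.find hP = r at hr hPr hmin
    obtain ⟨J, b, hb, rfl, rfl⟩ := ih _ (by have := hr.1; have := hr.2; omega) hr.2 rfl
    refine ⟨J + 1, fun j => Nat.casesOn j p b, ⟨?_, ?_, ?_⟩, rfl, rfl⟩
    · refine strictMonoOn_Iic_of_lt_succ fun j hj => ?_
      rcases j with _ | j
      · exact hr.1
      · exact hb.strictMonoOn (mem_Iic.2 (by omega)) (mem_Iic.2 (by omega)) j.lt_succ_self
    · rintro (_ | j) hj i hi
      · exact fun hPi => hmin i hi.2 ⟨⟨hi.1, hi.2.trans hr.2⟩, hPi⟩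
      · exact hb.not_of_mem_Ioo j (by omega) i hi
    · rintro (_ | _ | j) h0 hj
      · exact absurd h0 (lt_irrefl 0)
      · exact hPr
      · exact hb.of_interior (j + 1) j.succ_pos (by omega)
  · refine ⟨0, fun j => Nat.casesOn j p fun _ => q, ⟨?_, ?_, by omega⟩, rfl, rfl⟩
    · exact strictMonoOn_Iic_of_lt_succ fun j hj => by
        obtain rfl : j = 0 := by omega
        exact hpq
    · intro j hj i hi hPi
      obtain rfl : j = 0 := by omega
      exact hP ⟨i, hi, hPi⟩

lemma Breaks.lt (hb : Breaks P J b) {i j : ℕ} (hij : i < j) (hj : j ≤ J) : b i < b j :=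
  hb.strictMonoOn (mem_Iic.2 (by omega)) (mem_Iic.2 hj) hij

lemma Breaks.le (hb : Breaks P J b) {i j : ℕ} (hij : i ≤ j) (hj : j ≤ J) : b i ≤ b j :=
  hb.strictMonoOn.monotoneOn (mem_Iic.2 (by omega)) (mem_Iic.2 hj) hij

lemma Breaks.Icc_div_subset (hb : Breaks P J b) (n : ℕ) {i j : ℕ} (hij : i ≤ j) (hj : j ≤ J) :
    Icc ((b i : ℝ) / n) ((b j : ℝ) / n) ⊆ Icc ((b 0 : ℝ) / n) ((b J : ℝ) / n) :=
  Icc_subset_Icc (natCast_div_le_natCast_div n (hb.le i.zero_le (hij.trans hj)))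
    (natCast_div_le_natCast_div n (hb.le hj le_rfl))

lemma Breaks.shift (hb : Breaks P J b) {i K : ℕ} (hK : i + K ≤ J) :
    Breaks P K fun j => b (i + j) where
  strictMonoOn _ _ _ hl hjl := hb.lt (by omega) (by rw [mem_Iic] at hl; omega)
  not_of_mem_Ioo j hj := hb.not_of_mem_Ioo (i + j) (by omega)
  of_interior j h0 hj := hb.of_interior (i + j) (by omega) (by omega)

lemma exists_mem_Ico_succ {α : Type*} [LinearOrder α] {b : ℕ → α} {x : α}
    (hx : x ∈ Ico (b 0) (b J)) : ∃ j < J, x ∈ Ico (b j) (b (j + 1)) := by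
  classical
  have hex : ∃ j, x < b j := ⟨J, hx.2⟩
  have hJ : Nat.find hex ≤ J := Nat.find_min' hex hx.2
  have h0 : Nat.find hex ≠ 0 := fun h => hx.1.not_gt (h ▸ Nat.find_spec hex)
  obtain ⟨j, hj⟩ := Nat.exists_eq_add_one_of_ne_zero h0
  exact ⟨j, by omega, not_lt.1 (Nat.find_min hex (by omega)), hj ▸ Nat.find_spec hex⟩

lemma Breaks.eq_of_mem_Ioo (hb : Breaks P J b) {i : ℕ} (hi : i ∈ Ioo (b 0) (b J)) (hP : P i) :
    ∃ j, 0 < j ∧ j < J ∧ i = b j := by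
  obtain ⟨j, hj, hij⟩ := exists_mem_Ico_succ (Ioo_subset_Ico_self hi)
  obtain rfl : b j = i :=
    hij.1.eq_or_lt.resolve_right fun h => hb.not_of_mem_Ioo j hj i ⟨h, hij.2⟩ hP
  exact ⟨j, Nat.pos_of_ne_zero fun h => hi.1.ne (by rw [h]), hj, rfl⟩

end Breaks

section Pieces

variable {n : ℕ} {β t M : ℝ} {f : ℝ → ℝ} {U : ℕ → ℝ} {J : ℕ} {b : ℕ → ℕ}

lemma smallVar_mono {p p' q q' : ℕ} (hp : p ≤ p') (hq : q' ≤ q) :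
    smallVar n t U p' q' ≤ smallVar n t U p q := by
  classical
  exact Finset.sum_le_sum_of_subset_of_nonneg
    (Finset.filter_subset_filter _ (Finset.Ico_subset_Ico hp (by omega))) fun _ _ _ => abs_nonneg _

lemma Breaks.abs_sub_le_smallVar (hb : Breaks (LargeJump n t U) J b) {j i : ℕ} (hj : j < J)
    (hi : i ∈ Ico (b j) (b (j + 1))) : |U i - U (b j)| ≤ smallVar n t U (b 0) (b J) := by
  classical
  have h0 := hb.le j.zero_le hj.le
  have hJ : b (j + 1) ≤ b J := hb.le hj le_rfl
  have hi2 := hi.2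
  rw [← Finset.sum_Ico_sub U hi.1]
  refine (Finset.abs_sum_le_sum_abs _ _).trans
    (Finset.sum_le_sum_of_subset_of_nonneg (fun l hl => ?_) fun _ _ _ => abs_nonneg _)
  rw [Finset.mem_Ico] at hl
  exact Finset.mem_filter.2 ⟨Finset.mem_Ico.2 ⟨by omega, by omega⟩,
    hb.not_of_mem_Ioo j hj (l + 1) ⟨by omega, by omega⟩⟩

lemma sub_mul_sq_le_add_sq {a e ω : ℝ} (ht : 0 < t) (he : |e| ≤ t * ω) :
    (1 - t) * a ^ 2 - t * ω ^ 2 ≤ (a + e) ^ 2 := by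
  have hsq : e ^ 2 ≤ (t * ω) ^ 2 := sq_le_sq' (abs_le.1 he).1 (abs_le.1 he).2
  refine le_of_mul_le_mul_left ?_ ht
  nlinarith [sq_nonneg (t * a + e), mul_nonneg ht.le (sq_nonneg e)]

lemma sub_mul_sq_le_cellFidelity (ht : 0 < t) {i : ℕ}
    (hf : ContinuousOn f (Icc ((i : ℝ) / n) (((i + 1 : ℕ) : ℝ) / n))) {c v ω x₀ : ℝ}
    (hv : |v - c| ≤ t * ω / 2)
    (haff : ∀ x ∈ Icc ((i : ℝ) / n) (((i + 1 : ℕ) : ℝ) / n),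
      |f x - f x₀ - M * (x - x₀)| ≤ t * ω / 2) :
    ∫ x in (i : ℝ) / n..((i + 1 : ℕ) : ℝ) / n,
      ((1 - t) * (c - f x₀ - M * (x - x₀)) ^ 2 - t * ω ^ 2) ≤ cellFidelity n f i v := by
  have hi := natCast_div_le_natCast_div n i.le_succ
  refine intervalIntegral.integral_mono_on hi (Continuous.intervalIntegrable (by fun_prop) _ _)
    (intervalIntegrable_const_sub_sq hi hf v) fun x hx => ?_
  have he : |(v - c) - (f x - f x₀ - M * (x - x₀))| ≤ t * ω :=
    (abs_sub _ _).trans (by linarith [haff x hx])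
  refine (sub_mul_sq_le_add_sq ht he).trans_eq ?_
  ring

lemma le_windowEnergy_of_abs_sub_le (hβ : 0 ≤ β) (ht : 0 < t) {p q : ℕ} (hpq : p ≤ q)
    (hf : ContinuousOn f (Icc ((p : ℝ) / n) ((q : ℝ) / n))) {c ω : ℝ}
    (hU : ∀ i ∈ Ico p q, |U i - c| ≤ t * ω / 2)
    (haff : NearAffineOn f M (Icc ((p : ℝ) / n) ((q : ℝ) / n)) (t * ω / 2)) :
    β * ((1 - t) * (M ^ 2 * (((q : ℝ) / n - p / n) ^ 3 / 12) +
        ((q : ℝ) / n - p / n) * (c - f (blockMid n p q)) ^ 2) -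
      t * ω ^ 2 * ((q : ℝ) / n - p / n)) ≤ windowEnergy n β f U p q := by
  set g : ℝ → ℝ := fun x =>
    (1 - t) * (c - f (blockMid n p q) - M * (x - blockMid n p q)) ^ 2 - t * ω ^ 2 with hg
  have hgint (x y : ℝ) : IntervalIntegrable g volume x y :=
    Continuous.intervalIntegrable (by fun_prop) _ _
  have hsum : ∑ i ∈ Finset.Ico p q, ∫ x in (i : ℝ) / n..((i + 1 : ℕ) : ℝ) / n, g x =
      ∫ x in (p : ℝ) / n..(q : ℝ) / n, g x :=
    intervalIntegral.sum_integral_adjacent_intervals_Ico (a := fun i : ℕ => (i : ℝ) / n) hpq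
      fun _ _ => hgint _ _
  have hfid : ∫ x in (p : ℝ) / n..(q : ℝ) / n, g x ≤
      ∑ i ∈ Finset.Ico p q, cellFidelity n f i (U i) := by
    rw [← hsum]
    refine Finset.sum_le_sum fun i hi => ?_
    rw [Finset.mem_Ico] at hi
    have hsub : Icc ((i : ℝ) / n) (((i + 1 : ℕ) : ℝ) / n) ⊆ Icc ((p : ℝ) / n) ((q : ℝ) / n) :=
      Icc_subset_Icc (natCast_div_le_natCast_div n hi.1) (natCast_div_le_natCast_div n hi.2)
    exact sub_mul_sq_le_cellFidelity ht (hf.mono hsub) (hU i hi)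
      fun x hx => haff x (hsub hx) _ (blockMid_mem_Icc n hpq)
  refine le_add_of_nonneg_of_le (Finset.sum_nonneg fun _ _ => jumpCost_nonneg _ _)
    (mul_le_mul_of_nonneg_left (hfid.trans_eq' ?_) hβ)
  rw [hg, intervalIntegral.integral_sub (Continuous.intervalIntegrable (by fun_prop) _ _)
    intervalIntegrable_const, intervalIntegral.integral_const_mul,
    intervalIntegral.integral_const, smul_eq_mul, blockMid, integral_const_sub_linear_sq]
  ring

lemma Breaks.le_windowEnergy (hb : Breaks (LargeJump n t U) (J + 1) b) (hn : 0 < n) (hβ : 0 ≤ β)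
    (ht : 0 < t) (hf : ContinuousOn f (Icc ((b 0 : ℝ) / n) ((b (J + 1) : ℝ) / n)))
    (hsmall : smallVar n t U (b 0) (b (J + 1)) ≤ t * omg n / 2)
    (haff : NearAffineOn f M (Icc ((b 0 : ℝ) / n) ((b (J + 1) : ℝ) / n)) (t * omg n / 2)) :
    ∑ j ∈ Finset.range (J + 1), β * ((1 - t) *
        (M ^ 2 * (((b (j + 1) : ℝ) / n - b j / n) ^ 3 / 12) + ((b (j + 1) : ℝ) / n - b j / n) *
          (U (b j) - f (blockMid n (b j) (b (j + 1)))) ^ 2) -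
        t * omg n ^ 2 * ((b (j + 1) : ℝ) / n - b j / n)) +
      J * ((1 - t) * (4 / 3) * omg n ^ 3) ≤ windowEnergy n β f U (b 0) (b (J + 1)) := by
  rw [windowEnergy_eq_sum_blocks fun j hj => hb.lt j.lt_succ_self hj]
  refine add_le_add (Finset.sum_le_sum fun j hj => ?_) ?_
  · have hj := Finset.mem_range.1 hj
    have hsub := hb.Icc_div_subset n j.le_succ hj
    exact le_windowEnergy_of_abs_sub_le hβ ht (hb.le j.le_succ hj) (hf.mono hsub)
      (fun i hi => (hb.abs_sub_le_smallVar hj hi).trans hsmall) (haff.mono hsub)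
  · have hjump : ∀ j ∈ Finset.range J, (1 - t) * (4 / 3) * omg n ^ 3 ≤
        jumpCost n (U (b (j + 1)) - U (b (j + 1) - 1)) := fun j hj =>
      le_jumpCost_of_jumpSlope_lt hn
        (hb.of_interior (j + 1) j.succ_pos (Nat.succ_lt_succ (Finset.mem_range.1 hj)))
    simpa using Finset.card_nsmul_le_sum _ _ _ hjump

end Pieces

/-! ### Runs of regular pieces -/

/-- The pieces `b 0, …, b K` are cut at the large jumps of `U`, have length about `2 H ω(n)`, and
on each of them `U` is about the value of `f` at the midpoint; the error is `η` in the scale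
`ω(n)`. Moreover `f` has slope about `M` on the whole run. -/
structure RegularRun (n : ℕ) (t : ℝ) (U : ℕ → ℝ) (f : ℝ → ℝ) (M H η : ℝ) (K : ℕ) (b : ℕ → ℕ) :
    Prop where
  breaks : Breaks (LargeJump n t U) K b
  smallVar_le : smallVar n t U (b 0) (b K) ≤ η * omg n
  nearAffineOn : NearAffineOn f M (Icc ((b 0 : ℝ) / n) ((b K : ℝ) / n)) (η * omg n)
  abs_length_sub_le : ∀ j < K, |(b (j + 1) : ℝ) / n - b j / n - 2 * H * omg n| ≤ η * omg n
  abs_offset_le : ∀ j < K, |U (b j) - f (blockMid n (b j) (b (j + 1)))| ≤ η * omg n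

lemma exists_run_le {x : ℕ → ℝ} {J K Q : ℕ} {C ε : ℝ} (hx : ∀ j < J, 0 ≤ x j)
    (hsum : ∑ j ∈ Finset.range J, x j ≤ C) (hJ : Q * K ≤ J) (hQ : C < Q * ε) :
    ∃ i, i + K ≤ J ∧ ∀ j < K, x (i + j) ≤ ε := by
  by_contra! hcon
  have hle {l : ℕ} (hl : l < Q) : l * K + K ≤ J :=
    (Nat.succ_mul l K).symm.trans_le ((Nat.mul_le_mul_right K hl).trans hJ)
  choose! g hgK hg using fun l hl => hcon (l * K) (hle hl)
  have hinj : InjOn (fun l => l * K + g l) (Finset.range Q : Set ℕ) := by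
    intro l hl l' hl' h
    simp only [Finset.coe_range, mem_Iio] at hl hl'
    have hdiv {m : ℕ} (hm : m < Q) : (m * K + g m) / K = m :=
      Nat.div_eq_of_lt_le (by omega) (by rw [Nat.succ_mul]; have := hgK m hm; omega)
    rw [← hdiv hl, ← hdiv hl']
    exact congrArg (· / K) h
  have hsub : (Finset.range Q).image (fun l => l * K + g l) ⊆ Finset.range J := by
    simp only [Finset.image_subset_iff, Finset.mem_range]
    exact fun l hl => by have := hle hl; have := hgK l hl; omega
  have hge : Q * ε ≤ ∑ l ∈ Finset.range Q, x (l * K + g l) := by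
    simpa using Finset.card_nsmul_le_sum _ _ _ fun l hl => (hg l (Finset.mem_range.1 hl)).le
  rw [← Finset.sum_image (f := x) hinj] at hge
  linarith [Finset.sum_le_sum_of_subset_of_nonneg hsub fun i hi _ => hx i (Finset.mem_range.1 hi)]

/-- The energy of a piece of length `2 H lam ω(n)` whose value is off by `d ω(n)`, in excess of the
energy that optimal pieces use for the same length, in the scale `ω(n) ^ 3`. -/
noncomputable def pieceExcess (β H lam d : ℝ) : ℝ :=
  2 / 3 * (lam - 1) ^ 2 * (lam + 2) + 2 * H * β * lam * d ^ 2

section Excess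

variable {β H lam d : ℝ}

lemma pieceExcess_nonneg (hβ : 0 ≤ β) (hH : 0 ≤ H) (hlam : 0 ≤ lam) :
    0 ≤ pieceExcess β H lam d := by
  unfold pieceExcess
  positivity

lemma sub_two_le_pieceExcess (hβ : 0 ≤ β) (hH : 0 ≤ H) (hlam : 0 ≤ lam) :
    lam - 2 ≤ pieceExcess β H lam d := by
  have hd : 0 ≤ 2 * H * β * lam * d ^ 2 := by positivity
  unfold pieceExcess
  nlinarith [mul_nonneg (by linarith : 0 ≤ lam + 5 / 2) (sq_nonneg (lam - 5 / 4))]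

lemma exists_abs_le_of_pieceExcess_le (hβ : 0 < β) (hH : 0 < H) {η : ℝ} (hη : 0 < η) :
    ∃ ε > 0, ∀ lam d, 0 ≤ lam → pieceExcess β H lam d ≤ ε → |2 * H * (lam - 1)| ≤ η ∧ |d| ≤ η := by
  refine ⟨min (1 / 4) (min (η ^ 2 / (4 * H ^ 2)) (H * β * η ^ 2)), by positivity,
    fun lam d hlam h => ?_⟩
  simp only [le_min_iff, le_div_iff₀ (by positivity : 0 < 4 * H ^ 2)] at h
  obtain ⟨hquarter, hH2, hHβ⟩ := h
  unfold pieceExcess at hquarter hH2 hHβ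
  have hd0 : 0 ≤ 2 * H * β * lam * d ^ 2 := by positivity
  have : 0 ≤ 2 / 3 * (lam - 1) ^ 2 * (lam + 2) := by positivity
  have hsq : (lam - 1) ^ 2 ≤ 2 / 3 * (lam - 1) ^ 2 * (lam + 2) + 2 * H * β * lam * d ^ 2 := by
    nlinarith [mul_nonneg (sq_nonneg (lam - 1)) hlam]
  have hhalf : 1 / 2 ≤ lam := by
    have : |lam - 1| ≤ 1 / 2 := abs_le_of_sq_le_sq (by linarith) (by norm_num)
    linarith [(abs_le.1 this).1]
  constructor
  · refine abs_le_of_sq_le_sq ?_ hη.le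
    linarith [mul_le_mul_of_nonneg_right hsq (by positivity : 0 ≤ 4 * H ^ 2)]
  · refine abs_le_of_sq_le_sq (le_of_mul_le_mul_left ?_ (mul_pos hH hβ)) hη.le
    have hHd : 0 ≤ H * β * d ^ 2 := by positivity
    nlinarith

end Excess

section Run

variable {n : ℕ} {β t M H : ℝ} {f : ℝ → ℝ} {U : ℕ → ℝ} {J : ℕ} {b : ℕ → ℕ}

/-- The length of the piece `b j, …, b (j + 1) - 1` relative to the optimal length `2 H ω(n)`. -/
noncomputable def relLength (n : ℕ) (H : ℝ) (b : ℕ → ℕ) (j : ℕ) : ℝ :=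
  ((b (j + 1) : ℝ) / n - b j / n) / (2 * H * omg n)

/-- The offset of `U` from the value of `f` at the midpoint of a piece, in the scale `ω(n)`. -/
noncomputable def relOffset (n : ℕ) (f : ℝ → ℝ) (U : ℕ → ℝ) (b : ℕ → ℕ) (j : ℕ) : ℝ :=
  (U (b j) - f (blockMid n (b j) (b (j + 1)))) / omg n

lemma Breaks.relLength_nonneg {P : ℕ → Prop} (hb : Breaks P J b) (hH : 0 ≤ H) {j : ℕ}
    (hj : j < J) : 0 ≤ relLength n H b j :=
  div_nonneg (sub_nonneg.2 (natCast_div_le_natCast_div n (hb.le j.le_succ hj)))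
    (mul_nonneg (by positivity) (omg_nonneg n))

lemma sum_relLength (n : ℕ) (H : ℝ) (b : ℕ → ℕ) (J : ℕ) :
    ∑ j ∈ Finset.range J, relLength n H b j =
      ((b J : ℝ) / n - b 0 / n) / (2 * H * omg n) := by
  simp only [relLength]
  rw [← Finset.sum_div, Finset.sum_range_sub (fun j => (b j : ℝ) / n)]

lemma Breaks.mul_sum_pieceExcess_le (hb : Breaks (LargeJump n t U) (J + 1) b) (hn : 2 ≤ n)
    (hβ : 0 ≤ β) (ht : 0 < t) (hH : 0 < H) (hMH : β * M ^ 2 * H ^ 3 = 1)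
    (hf : ContinuousOn f (Icc ((b 0 : ℝ) / n) ((b (J + 1) : ℝ) / n)))
    (hsmall : smallVar n t U (b 0) (b (J + 1)) ≤ t * omg n / 2)
    (haff : NearAffineOn f M (Icc ((b 0 : ℝ) / n) ((b (J + 1) : ℝ) / n)) (t * omg n / 2)) {E : ℝ}
    (hE : windowEnergy n β f U (b 0) (b (J + 1)) ≤ E * omg n ^ 3) :
    (1 - t) * (∑ j ∈ Finset.range (J + 1), pieceExcess β H (relLength n H b j)
        (relOffset n f U b j) + 2 * ∑ j ∈ Finset.range (J + 1), relLength n H b j) ≤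
      E + (1 - t) * (4 / 3) + 2 * t * β * H * ∑ j ∈ Finset.range (J + 1), relLength n H b j := by
  have hω := omg_pos hn
  have h := (hb.le_windowEnergy (by omega) hβ ht hf hsmall haff).trans hE
  have hterm (j : ℕ) : β * ((1 - t) *
        (M ^ 2 * (((b (j + 1) : ℝ) / n - b j / n) ^ 3 / 12) + ((b (j + 1) : ℝ) / n - b j / n) *
          (U (b j) - f (blockMid n (b j) (b (j + 1)))) ^ 2) -
        t * omg n ^ 2 * ((b (j + 1) : ℝ) / n - b j / n)) =
      omg n ^ 3 * ((1 - t) * pieceExcess β H (relLength n H b j) (relOffset n f U b j) +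
        (1 - t) * 2 * relLength n H b j - 2 * t * β * H * relLength n H b j -
        (1 - t) * (4 / 3)) := by
    have hlen : (b (j + 1) : ℝ) / n - b j / n = 2 * H * omg n * relLength n H b j := by
      unfold relLength; field
    have hoff : U (b j) - f (blockMid n (b j) (b (j + 1))) = omg n * relOffset n f U b j := by
      unfold relOffset; field
    rw [hlen, hoff, pieceExcess]
    linear_combination (1 - t) * (2 / 3) * omg n ^ 3 * relLength n H b j ^ 3 * hMH
  simp only [hterm] at h
  rw [← Finset.mul_sum, Finset.sum_sub_distrib, Finset.sum_sub_distrib, Finset.sum_add_distrib,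
    ← Finset.mul_sum, ← Finset.mul_sum, ← Finset.mul_sum, Finset.sum_const, Finset.card_range,
    nsmul_eq_mul] at h
  push_cast at h
  refine le_of_mul_le_mul_left ?_ (pow_pos hω 3)
  linarith

lemma Breaks.sum_pieceExcess_le (hb : Breaks (LargeJump n t U) (J + 1) b) (hn : 2 ≤ n)
    (hβ : 0 ≤ β) (ht : 0 < t) (hH : 0 < H) (hMH : β * M ^ 2 * H ^ 3 = 1)
    (hf : ContinuousOn f (Icc ((b 0 : ℝ) / n) ((b (J + 1) : ℝ) / n)))
    (hsmall : smallVar n t U (b 0) (b (J + 1)) ≤ t * omg n / 2)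
    (haff : NearAffineOn f M (Icc ((b 0 : ℝ) / n) ((b (J + 1) : ℝ) / n)) (t * omg n / 2)) {N : ℝ}
    (ht2 : t ≤ 1 / 2) (htN : t * (2 * H * N * β + 2 * N + 13) ≤ 1)
    (hE : windowEnergy n β f U (b 0) (b (J + 1)) ≤ (2 * N + 9) * omg n ^ 3)
    (hlen : ∑ j ∈ Finset.range (J + 1), relLength n H b j ∈ Icc (N - 1 / 2) N) :
    ∑ j ∈ Finset.range (J + 1), pieceExcess β H (relLength n H b j) (relOffset n f U b j) ≤
      14 := by
  have h := hb.mul_sum_pieceExcess_le hn hβ ht hH hMH hf hsmall haff hE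
  set X := ∑ j ∈ Finset.range (J + 1), pieceExcess β H (relLength n H b j) (relOffset n f U b j)
  set L := ∑ j ∈ Finset.range (J + 1), relLength n H b j
  have hmul : (1 - t) * (X + 2 * L) ≤ (1 - t) * (2 * N + 13) := by
    have := mul_le_mul_of_nonneg_left hlen.2 (by positivity : 0 ≤ 2 * t * β * H)
    linarith
  linarith [le_of_mul_le_mul_left hmul (by linarith), hlen.1]

lemma Breaks.sum_relLength_le {P : ℕ → Prop} (hb : Breaks P J b) (hβ : 0 ≤ β) (hH : 0 ≤ H)
    (d : ℕ → ℝ) : ∑ j ∈ Finset.range J, relLength n H b j ≤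
      ∑ j ∈ Finset.range J, pieceExcess β H (relLength n H b j) (d j) + J * 2 := by
  rw [← sub_le_iff_le_add]
  have h := Finset.sum_le_sum fun j hj => sub_two_le_pieceExcess (d := d j) hβ hH
    (hb.relLength_nonneg (n := n) hH (Finset.mem_range.1 hj))
  rwa [Finset.sum_sub_distrib, Finset.sum_const, Finset.card_range, nsmul_eq_mul] at h

lemma Breaks.regularRun {K : ℕ} (hb : Breaks (LargeJump n t U) K b) (hn : 2 ≤ n) (hH : 0 < H)
    {η : ℝ} (hsmall : smallVar n t U (b 0) (b K) ≤ η * omg n)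
    (haff : NearAffineOn f M (Icc ((b 0 : ℝ) / n) ((b K : ℝ) / n)) (η * omg n))
    (h : ∀ j < K, |2 * H * (relLength n H b j - 1)| ≤ η ∧ |relOffset n f U b j| ≤ η) :
    RegularRun n t U f M H η K b := by
  have hω := omg_pos hn
  refine ⟨hb, hsmall, haff, fun j hj => ?_, fun j hj => ?_⟩
  · have heq : (b (j + 1) : ℝ) / n - b j / n - 2 * H * omg n =
        2 * H * (relLength n H b j - 1) * omg n := by
      unfold relLength; field
    rw [heq, abs_mul, abs_of_pos hω]
    exact mul_le_mul_of_nonneg_right (h j hj).1 hω.le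
  · have heq : U (b j) - f (blockMid n (b j) (b (j + 1))) = relOffset n f U b j * omg n := by
      unfold relOffset; field
    rw [heq, abs_mul, abs_of_pos hω]
    exact mul_le_mul_of_nonneg_right (h j hj).2 hω.le

lemma Breaks.exists_regularRun (hb : Breaks (LargeJump n t U) (J + 1) b) (hn : 2 ≤ n)
    (hβ : 0 ≤ β) (hH : 0 < H) {K Q : ℕ} {ε η : ℝ}
    (hε : ∀ lam d, 0 ≤ lam → pieceExcess β H lam d ≤ ε → |2 * H * (lam - 1)| ≤ η ∧ |d| ≤ η)
    (hQ : 14 < Q * ε) (hsmall : smallVar n t U (b 0) (b (J + 1)) ≤ η * omg n)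
    (haff : NearAffineOn f M (Icc ((b 0 : ℝ) / n) ((b (J + 1) : ℝ) / n)) (η * omg n))
    (hexc : ∑ j ∈ Finset.range (J + 1), pieceExcess β H (relLength n H b j) (relOffset n f U b j) ≤
      14)
    (hlen : 2 * (Q * K : ℕ) + 14 ≤ ∑ j ∈ Finset.range (J + 1), relLength n H b j) :
    ∃ i, i + K ≤ J + 1 ∧ RegularRun n t U f M H η K fun j => b (i + j) := by
  have hlam0 (j : ℕ) (hj : j < J + 1) := hb.relLength_nonneg (n := n) hH.le hj
  have hJ : Q * K ≤ J + 1 := by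
    have hcount := hb.sum_relLength_le (n := n) hβ hH.le (relOffset n f U b)
    have : ((Q * K : ℕ) : ℝ) ≤ (J + 1 : ℕ) := by linarith
    exact_mod_cast this
  obtain ⟨i, hi, hrun⟩ :=
    exists_run_le (fun j hj => pieceExcess_nonneg hβ hH.le (hlam0 j hj)) hexc hJ hQ
  refine ⟨i, hi, (hb.shift hi).regularRun hn hH ?_ ?_ fun j hj => ?_⟩
  · exact (smallVar_mono (hb.le i.zero_le (by omega)) (hb.le hi le_rfl)).trans hsmall
  · exact haff.mono (hb.Icc_div_subset n (Nat.le_add_right i K) hi)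
  · exact hε _ _ (hlam0 (i + j) (by omega)) (hrun j hj)

end Run

section Asymptotics

variable {β M H xinf η : ℝ} {f : ℝ → ℝ} {k : ℕ → ℕ} {U : ℕ → ℕ → ℝ}

lemma eventually_smallVar_le (hβ : 0 ≤ β) {A E t s : ℝ} (hA : 0 < A) (ht : 0 < t) (hs : 0 < s) :
    ∀ᶠ n : ℕ in atTop, ∀ (U : ℕ → ℝ) (p q : ℕ), p ≤ q → (q : ℝ) / n - p / n ≤ A * omg n →
      windowEnergy n β f U p q ≤ E * omg n ^ 3 → smallVar n t U p q ≤ s * omg n := by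
  classical
  filter_upwards [eventually_sum_abs_le_mul_omg (E := E) hA ht hs, eventually_gt_atTop 0]
    with n h hn U p q hpq hlen hE
  refine h (smallJumps n t U p q) (fun i => U (i + 1) - U i) ?_ (fun i hi => ?_) ?_
  · have hcard : (smallJumps n t U p q).card ≤ q - p := by
      rw [← Nat.card_Ico]
      exact Finset.card_le_card ((Finset.filter_subset _ _).trans
        (Finset.Ico_subset_Ico le_rfl (Nat.sub_le q 1)))
    have hn' : (0 : ℝ) < n := Nat.cast_pos.2 hn
    rw [← sub_div, div_le_iff₀ hn', ← Nat.cast_sub hpq] at hlen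
    calc ((smallJumps n t U p q).card : ℝ) ≤ (q - p : ℕ) := by exact_mod_cast hcard
      _ ≤ A * (n * omg n) := hlen.trans_eq (by ring)
  · simpa [LargeJump] using (Finset.mem_filter.1 hi).2
  · refine (Finset.sum_le_sum_of_subset_of_nonneg (Finset.filter_subset _ _)
      fun _ _ _ => jumpCost_nonneg _ _).trans (le_trans ?_ hE)
    exact le_add_of_nonneg_right
      (mul_nonneg hβ (Finset.sum_nonneg fun _ _ => cellFidelity_nonneg _ _ _ _))

lemma eventually_window_length_mem_Icc (hx : Tendsto (fun n => (k n : ℝ) / n) atTop (nhds xinf))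
    (hxinf : 0 < xinf) {A : ℝ} (hA : 0 < A) (N : ℕ) {r : ℝ} (hr : 0 < r) : ∀ᶠ n in atTop,
      (k n : ℝ) / n - (windowStart k A N n : ℝ) / n ∈
        Icc ((N - r) * (A * omg n)) (N * (A * omg n)) := by
  filter_upwards [eventually_mul_blockLen_lt hx hxinf hA.le N, eventually_gt_atTop 0,
    tendsto_natCast_mul_omg_atTop.eventually_ge_atTop (N / (r * A))] with n hNk hn hlarge
  have hn' : (0 : ℝ) < n := Nat.cast_pos.2 hn
  have hω : N * (1 / (n : ℝ)) ≤ r * (A * omg n) := by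
    rw [div_le_iff₀ (by positivity)] at hlarge
    rw [mul_one_div, div_le_iff₀ hn']
    linarith
  rw [div_sub_windowStart_div hNk.le]
  refine ⟨?_, mul_le_mul_of_nonneg_left (blockLen_div_le hA.le n) N.cast_nonneg⟩
  have := mul_le_mul_of_nonneg_left (mul_omg_sub_le_blockLen_div A hn) (N.cast_nonneg (α := ℝ))
  linarith

lemma eventually_exists_breaks_sum_pieceExcess_le (hβ : 0 < β) (hf : ContinuousOn f (Icc 0 1))
    (hM : HasStrictDerivAt f M xinf) (hxinf : xinf ∈ Ioo (0 : ℝ) 1)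
    (hx : Tendsto (fun n => (k n : ℝ) / n) atTop (nhds xinf))
    (hU : ∀ᶠ n in atTop, IsDiscreteMinimizer n β f (U n)) (hH : 0 < H)
    (hMH : β * M ^ 2 * H ^ 3 = 1) {N : ℕ} (hN : 0 < N) {t : ℝ} (ht0 : 0 < t) (ht2 : t ≤ 1 / 2)
    (htN : t * (2 * H * N * β + 2 * N + 13) ≤ 1) :
    ∀ᶠ n in atTop, ∃ J b, Breaks (LargeJump n t (U n)) (J + 1) b ∧ 0 < b 0 ∧ b (J + 1) = k n ∧
      smallVar n t (U n) (b 0) (b (J + 1)) ≤ t * omg n / 2 ∧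
      NearAffineOn f M (Icc ((b 0 : ℝ) / n) ((b (J + 1) : ℝ) / n)) (t * omg n / 2) ∧
      ∑ j ∈ Finset.range (J + 1), pieceExcess β H (relLength n H b j) (relOffset n f (U n) b j) ≤
        14 ∧ (N : ℝ) - 1 / 2 ≤ ∑ j ∈ Finset.range (J + 1), relLength n H b j := by
  have hA : 0 < 2 * H := by positivity
  filter_upwards [eventually_ge_atTop 2, eventually_lt_of_tendsto_div hx hxinf.2,
    eventually_mul_blockLen_lt hx hxinf.1 hA.le N, eventually_blockLen_pos hA,
    eventually_window_length_mem_Icc hx hxinf.1 hA N one_half_pos,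
    eventually_nearAffineOn_window hM hxinf.1 hx hA.le N (half_pos ht0),
    eventually_windowEnergy_le hβ hf hM hxinf hx hU hA hN,
    eventually_smallVar_le (f := f) hβ.le (A := N * (2 * H)) (E := 2 * N + 9) (by positivity) ht0
      (half_pos ht0)] with n hn hkn hNk hm hlen haff hE hsmall
  have hω := omg_pos hn
  have hNE : N * (4 / 3 + β * M ^ 2 * (2 * H) ^ 3 / 12) + 9 = 2 * N + 9 := by
    linear_combination (2 / 3) * N * hMH
  rw [hNE] at hE
  have hstart : windowStart k (2 * H) N n < k n := Nat.sub_lt (by omega) (by positivity)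
  have hsmall := hsmall (U n) _ _ hstart.le (by linarith [hlen.2]) hE
  obtain ⟨J, b, hb, hb0, hbJ⟩ := exists_breaks (LargeJump n t (U n)) hstart
  rw [← hb0, ← hbJ] at hE hsmall hlen haff
  have hrel : ∑ j ∈ Finset.range (J + 1), relLength n H b j ∈ Icc ((N : ℝ) - 1 / 2) N := by
    rw [sum_relLength]
    exact ⟨(le_div_iff₀ (by positivity)).2 hlen.1, (div_le_iff₀ (by positivity)).2 hlen.2⟩
  rw [← mul_div_right_comm] at hsmall haff
  have hfb := hf.mono (Icc_natCast_div_subset (p := b 0) (hbJ.trans_le hkn.le))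
  exact ⟨J, b, hb, hb0 ▸ Nat.sub_pos_of_lt hNk, hbJ, hsmall, haff,
    hb.sum_pieceExcess_le hn hβ.le ht0 hH hMH hfb hsmall haff ht2 htN hE hrel, hrel.1⟩

lemma eventually_exists_regularRun (hβ : 0 < β) (hf : ContinuousOn f (Icc 0 1))
    (hM : HasStrictDerivAt f M xinf) (hxinf : xinf ∈ Ioo (0 : ℝ) 1)
    (hx : Tendsto (fun n => (k n : ℝ) / n) atTop (nhds xinf))
    (hU : ∀ᶠ n in atTop, IsDiscreteMinimizer n β f (U n)) (hH : 0 < H)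
    (hMH : β * M ^ 2 * H ^ 3 = 1) (K : ℕ) (hη : 0 < η) :
    ∀ᶠ n in atTop, ∃ t b, RegularRun n t (U n) f M H η K b ∧ 0 < b 0 ∧ b K ≤ k n := by
  obtain ⟨ε, hε0, hε⟩ := exists_abs_le_of_pieceExcess_le hβ hH hη
  obtain ⟨Q, hQ⟩ := exists_nat_gt (14 / ε)
  rw [div_lt_iff₀ hε0] at hQ
  set N : ℕ := 2 * (Q * K) + 15 with hN
  set t := min (1 / 2) (min (2 * η) (1 / (2 * H * N * β + 2 * N + 13)))
  have ht0 : 0 < t := by positivity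
  have htη : t ≤ 2 * η := (min_le_right _ _).trans (min_le_left _ _)
  have htN : t * (2 * H * N * β + 2 * N + 13) ≤ 1 := by
    rw [← le_div_iff₀ (by positivity)]
    exact (min_le_right _ _).trans (min_le_right _ _)
  filter_upwards [eventually_ge_atTop 2, eventually_exists_breaks_sum_pieceExcess_le hβ hf hM hxinf
    hx hU hH hMH (by omega) ht0 (min_le_left _ _) htN]
    with n hn ⟨J, b, hb, hb0, hbJ, hsmall, haff, hexc, hrel⟩
  have htη' : t * omg n / 2 ≤ η * omg n := by
    linarith [mul_le_mul_of_nonneg_right htη (omg_nonneg n)]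
  obtain ⟨i, hi, hrun⟩ := hb.exists_regularRun hn hβ.le hH hε hQ (hsmall.trans htη')
    (fun x hx y hy => (haff x hx y hy).trans htη') hexc (K := K) (by
      refine le_trans ?_ hrel
      rw [hN]; push_cast; linarith)
  exact ⟨t, _, hrun, hb0.trans_le (hb.le i.zero_le (by omega)), (hb.le hi le_rfl).trans hbJ.le⟩

end Asymptotics

section SlopeZero

variable {n : ℕ} {β t E : ℝ} {f : ℝ → ℝ} {U : ℕ → ℝ}

lemma exists_windowEnergy_le_div (hβ : 0 ≤ β) {p q m N : ℕ} (hN : 0 < N) (hm : 0 < m)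
    (hq : p + N * m ≤ q) (hE : windowEnergy n β f U p q ≤ E) :
    ∃ a, p ≤ a ∧ a + m ≤ q ∧ windowEnergy n β f U a (a + m) ≤ E / N := by
  obtain ⟨J, rfl⟩ := Nat.exists_eq_succ_of_ne_zero hN.ne'
  have hsum : ∑ j ∈ Finset.range (J + 1), windowEnergy n β f U (p + j * m) (p + (j + 1) * m) ≤
      ∑ _j ∈ Finset.range (J + 1), E / (J + 1 : ℕ) := by
    have hblocks := windowEnergy_eq_sum_blocks (n := n) (β := β) (f := f) (U := U)
      (b := fun j => p + j * m) (J := J) fun j _ => by rw [Nat.succ_mul]; omega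
    rw [Finset.sum_const, Finset.card_range, nsmul_eq_mul, mul_div_cancel₀ _ (by positivity)]
    refine (windowEnergy_mono hβ (by simp) hq).trans hE |>.trans' (hblocks.ge.trans' ?_)
    exact le_add_of_nonneg_right (Finset.sum_nonneg fun _ _ => jumpCost_nonneg _ _)
  obtain ⟨j, hj, h⟩ := Finset.exists_le_of_sum_le (by simp) hsum
  rw [Nat.succ_mul, ← add_assoc] at h
  refine ⟨p + j * m, Nat.le_add_right p _, le_trans ?_ hq, h⟩
  rw [add_assoc, ← Nat.succ_mul]
  exact Nat.add_le_add_left (Nat.mul_le_mul_right m (Finset.mem_range.1 hj)) p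

lemma not_largeJump_of_windowEnergy_lt (hn : 0 < n) (hβ : 0 ≤ β) {p q i : ℕ} (hi : i ∈ Ioo p q)
    (hE : windowEnergy n β f U p q < (1 - t) * (4 / 3) * omg n ^ 3) : ¬LargeJump n t U i := by
  obtain ⟨i, rfl⟩ := Nat.exists_eq_succ_of_ne_zero (p.zero_le.trans_lt hi.1).ne'
  intro h
  refine hE.not_ge ((le_jumpCost_of_jumpSlope_lt hn h).trans ?_)
  refine le_add_of_le_of_nonneg ?_
    (mul_nonneg hβ (Finset.sum_nonneg fun _ _ => cellFidelity_nonneg _ _ _ _))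
  have hmem : i ∈ Finset.Ico p (q - 1) :=
    Finset.mem_Ico.2 ⟨Nat.lt_succ_iff.1 hi.1, Nat.lt_sub_of_add_lt hi.2⟩
  exact Finset.single_le_sum (f := fun i => jumpCost n (U (i + 1) - U i))
    (fun _ _ => jumpCost_nonneg _ _) hmem

lemma breaks_one {P : ℕ → Prop} {b : ℕ → ℕ} (hb : b 0 < b 1) (hP : ∀ i ∈ Ioo (b 0) (b 1), ¬P i) :
    Breaks P 1 b where
  strictMonoOn := strictMonoOn_Iic_of_lt_succ fun j hj => by
    obtain rfl : j = 0 := by omega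
    exact hb
  not_of_mem_Ioo j hj := by
    obtain rfl : j = 0 := by omega
    exact hP
  of_interior j h0 hj := by omega

lemma abs_sub_blockMid_le_of_windowEnergy_le (hn : 2 ≤ n) (hβ : 0 < β) {H η : ℝ} (hH : 0 < H)
    (hη : 0 < η) (ht : t ∈ Ioc 0 (1 / 2)) (htη : t ≤ η ^ 2 / 4) (hEη : E ≤ β * H * η ^ 2 / 4)
    {p q : ℕ} (hlen : H * omg n ≤ (q : ℝ) / n - p / n)
    (hf : ContinuousOn f (Icc ((p : ℝ) / n) ((q : ℝ) / n)))
    (hU : ∀ i ∈ Ico p q, |U i - U p| ≤ t * omg n / 2)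
    (haff : NearAffineOn f 0 (Icc ((p : ℝ) / n) ((q : ℝ) / n)) (t * omg n / 2))
    (hE : windowEnergy n β f U p q ≤ E * omg n ^ 3) :
    |U p - f (blockMid n p q)| ≤ η * omg n := by
  have hω := omg_pos hn
  set ℓ := (q : ℝ) / n - p / n
  set d := U p - f (blockMid n p q)
  have hℓ : 0 < ℓ := (by positivity : 0 < H * omg n).trans_le hlen
  have hpq : p ≤ q := by
    have : (p : ℝ) / n ≤ q / n := (sub_pos.1 hℓ).le
    rw [div_le_div_iff_of_pos_right (by positivity)] at this
    exact_mod_cast this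
  have hlow := (le_windowEnergy_of_abs_sub_le hβ.le ht.1 hpq hf hU haff).trans hE
  have hfid : β * ℓ * ((1 - t) * d ^ 2) ≤ β * ℓ * (η ^ 2 / 2 * omg n ^ 2) := by
    have htω : β * ℓ * (t * omg n ^ 2) ≤ β * ℓ * (η ^ 2 / 4 * omg n ^ 2) := by gcongr
    have hEω : E * omg n ^ 3 ≤ β * η ^ 2 / 4 * omg n ^ 2 * ℓ := calc
      E * omg n ^ 3 ≤ β * H * η ^ 2 / 4 * omg n ^ 3 := by gcongr
      _ = β * η ^ 2 / 4 * omg n ^ 2 * (H * omg n) := by ring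
      _ ≤ β * η ^ 2 / 4 * omg n ^ 2 * ℓ := by gcongr
    linarith
  have hd := le_of_mul_le_mul_left hfid (by positivity)
  refine abs_le_of_sq_le_sq ?_ (by positivity)
  linarith [mul_le_mul_of_nonneg_right (sub_le_sub_left ht.2 1) (sq_nonneg d)]

lemma regularRun_one_of_windowEnergy_le (hn : 2 ≤ n) (hβ : 0 < β) {H η : ℝ} (hH : 0 < H)
    (ht : t ∈ Ioc 0 (1 / 2)) (htη : t ≤ min η (η ^ 2 / 4)) (hE1 : E < 2 / 3)
    (hEη : E ≤ β * H * η ^ 2 / 4) (hη : 0 < η) {b : ℕ → ℕ}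
    (hlen : H * omg n ≤ (b 1 : ℝ) / n - b 0 / n)
    (hlen' : |(b 1 : ℝ) / n - b 0 / n - 2 * H * omg n| ≤ η * omg n)
    (hf : ContinuousOn f (Icc ((b 0 : ℝ) / n) ((b 1 : ℝ) / n)))
    (hsmall : smallVar n (1 / 2) U (b 0) (b 1) ≤ t * omg n / 2)
    (haff : NearAffineOn f 0 (Icc ((b 0 : ℝ) / n) ((b 1 : ℝ) / n)) (t * omg n / 2))
    (hE : windowEnergy n β f U (b 0) (b 1) ≤ E * omg n ^ 3) :
    RegularRun n (1 / 2) U f 0 H η 1 b := by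
  have hω := omg_pos hn
  have htη' : t * omg n / 2 ≤ η * omg n := by
    have := mul_le_mul_of_nonneg_right (htη.trans (min_le_left _ _)) hω.le
    linarith [mul_pos ht.1 hω]
  have hb01 : b 0 < b 1 := by
    have : (b 0 : ℝ) / n < b 1 / n := by linarith [mul_pos hH hω]
    rw [div_lt_div_iff_of_pos_right (by positivity)] at this
    exact_mod_cast this
  have hb : Breaks (LargeJump n (1 / 2) U) 1 b := breaks_one hb01 fun i hi =>
    not_largeJump_of_windowEnergy_lt (by omega) hβ.le hi (hE.trans_lt
      (mul_lt_mul_of_pos_right (hE1.trans_eq (by norm_num)) (pow_pos hω 3)))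
  refine ⟨hb, hsmall.trans htη', fun x hx y hy => (haff x hx y hy).trans htη', fun j hj => ?_,
    fun j hj => ?_⟩ <;> obtain rfl : j = 0 := by omega
  · exact hlen'
  · exact abs_sub_blockMid_le_of_windowEnergy_le hn hβ hH hη ht (htη.trans (min_le_right _ _)) hEη
      hlen hf (fun i hi => (hb.abs_sub_le_smallVar one_pos hi).trans hsmall) haff hE

end SlopeZero

section Asymptotics

variable {β xinf η : ℝ} {f : ℝ → ℝ} {k : ℕ → ℕ} {U : ℕ → ℕ → ℝ}

lemma mul_blockLen_le {A : ℝ} (hA : 0 ≤ A) (N n : ℕ) :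
    N * blockLen A n ≤ blockLen (N * A) n := by
  refine Nat.le_floor ?_
  rw [Nat.cast_mul, mul_assoc]
  exact mul_le_mul_of_nonneg_left
    (Nat.floor_le (mul_nonneg hA (mul_nonneg n.cast_nonneg (omg_nonneg n)))) N.cast_nonneg

lemma eventually_abs_blockLen_div_sub_le {A : ℝ} (hA : 0 ≤ A) (hη : 0 < η) :
    ∀ᶠ n : ℕ in atTop, |(blockLen A n : ℝ) / n - A * omg n| ≤ η * omg n := by
  filter_upwards [tendsto_natCast_mul_omg_atTop.eventually_ge_atTop (1 / η),
    eventually_gt_atTop 0] with n hlarge hn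
  have hnη : 1 / (n : ℝ) ≤ η * omg n := by
    rw [div_le_iff₀ hη] at hlarge
    rw [div_le_iff₀ (Nat.cast_pos.2 hn)]
    linarith
  rw [abs_le]
  constructor <;> linarith [blockLen_div_le hA n, mul_omg_sub_le_blockLen_div A hn, omg_nonneg n,
    mul_nonneg hη.le (omg_nonneg n)]

lemma eventually_exists_block_windowEnergy_le (hβ : 0 < β) (hf : ContinuousOn f (Icc 0 1))
    (hM : HasStrictDerivAt f 0 xinf) (hxinf : xinf ∈ Ioo (0 : ℝ) 1)
    (hx : Tendsto (fun n => (k n : ℝ) / n) atTop (nhds xinf))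
    (hU : ∀ᶠ n in atTop, IsDiscreteMinimizer n β f (U n)) {A : ℝ} (hA : 0 < A) {N : ℕ}
    (hN : 0 < N) : ∀ᶠ n in atTop, ∃ b : ℕ → ℕ, windowStart k (N * A) 1 n ≤ b 0 ∧
      b 1 = b 0 + blockLen A n ∧ b 1 ≤ k n ∧
      windowEnergy n β f (U n) (b 0) (b 1) ≤ 11 / N * omg n ^ 3 := by
  filter_upwards [eventually_blockLen_pos hA,
    eventually_mul_blockLen_lt hx hxinf.1 (A := N * A) (by positivity) 1,
    eventually_windowEnergy_le hβ hf hM hxinf hx hU (A := N * A) (by positivity) one_pos]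
    with n hm hNk hE
  have hend : windowStart k (N * A) 1 n + N * blockLen A n ≤ k n := by
    have := mul_blockLen_le hA.le N n
    unfold windowStart
    omega
  have hE11 : windowEnergy n β f (U n) (windowStart k (N * A) 1 n) (k n) ≤ 11 * omg n ^ 3 :=
    hE.trans (mul_le_mul_of_nonneg_right (by norm_num) (pow_nonneg (omg_nonneg n) 3))
  obtain ⟨a, ha, hak, hEa⟩ := exists_windowEnergy_le_div hβ.le hN hm hend hE11
  rw [mul_div_right_comm] at hEa
  exact ⟨fun i => Nat.casesOn i a fun _ => a + blockLen A n, ha, rfl, hak, hEa⟩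

lemma eventually_exists_regularRun_of_slope_zero (hβ : 0 < β) (hf : ContinuousOn f (Icc 0 1))
    (hM : HasStrictDerivAt f 0 xinf) (hxinf : xinf ∈ Ioo (0 : ℝ) 1)
    (hx : Tendsto (fun n => (k n : ℝ) / n) atTop (nhds xinf))
    (hU : ∀ᶠ n in atTop, IsDiscreteMinimizer n β f (U n)) {H : ℝ} (hH : 0 < H) (hη : 0 < η) :
    ∀ᶠ n in atTop, ∃ t b, RegularRun n t (U n) f 0 H η 1 b ∧ 0 < b 0 ∧ b 1 ≤ k n := by
  set t := min (1 / 2) (min η (η ^ 2 / 4))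
  have ht0 : 0 < t := by positivity
  obtain ⟨N, hN⟩ := exists_nat_gt (11 / min (1 / 2) (β * H * η ^ 2 / 4))
  have hE0 : 0 < min (1 / 2) (β * H * η ^ 2 / 4) := by positivity
  have hN0 : (0 : ℝ) < N := (by positivity : (0 : ℝ) ≤ _).trans_lt hN
  rw [div_lt_comm₀ hE0 hN0] at hN
  obtain ⟨hN1, hNη⟩ := lt_min_iff.1 hN
  have hA : 0 < 2 * H := by positivity
  filter_upwards [eventually_ge_atTop 2, eventually_lt_of_tendsto_div hx hxinf.2,
    eventually_mul_blockLen_lt hx hxinf.1 (A := N * (2 * H)) (by positivity) 1,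
    eventually_abs_blockLen_div_sub_le hA.le (lt_min hη hH),
    eventually_nearAffineOn_window hM hxinf.1 hx (A := N * (2 * H)) (by positivity) 1
      (half_pos ht0),
    eventually_exists_block_windowEnergy_le hβ hf hM hxinf hx hU hA (Nat.cast_pos.1 hN0),
    eventually_smallVar_le (f := f) hβ.le (E := 11 / N) hA one_half_pos (half_pos ht0)]
    with n hn hkn hNk hlen haff ⟨b, hb0, hb1, hbk, hE⟩ hsmall
  have hω := omg_pos hn
  have hlen_eq : (b 1 : ℝ) / n - b 0 / n = blockLen (2 * H) n / n := by
    rw [hb1]; push_cast; ring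
  have hlen_le := blockLen_div_le hA.le n
  rw [← hlen_eq] at hlen hlen_le
  have hvar := hsmall (U n) _ _ (hb1 ▸ Nat.le_add_right _ _) hlen_le hE
  rw [← mul_div_right_comm] at hvar haff
  have hlen_ge : H * omg n ≤ (b 1 : ℝ) / n - b 0 / n := by
    linarith [(abs_le.1 hlen).1, mul_le_mul_of_nonneg_right (min_le_right η H) hω.le]
  exact ⟨1 / 2, b, regularRun_one_of_windowEnergy_le hn hβ hH ⟨ht0, min_le_left _ _⟩
    (min_le_right _ _) (hN1.trans (by norm_num)) hNη.le hη hlen_ge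
    (hlen.trans (mul_le_mul_of_nonneg_right (min_le_left _ _) hω.le))
    (hf.mono (Icc_natCast_div_subset (hbk.trans hkn.le))) hvar
    (haff.mono (Icc_subset_Icc (natCast_div_le_natCast_div n hb0)
      (natCast_div_le_natCast_div n hbk))) hE, (Nat.sub_pos_of_lt hNk).trans_le hb0, hbk⟩

end Asymptotics

/-! ### Blow-ups of regular runs -/

/-- The blow-up of `u` at the point of the graph of `f` above `x`, in the scale `ω(n)`. -/
noncomputable def blowup (n : ℕ) (u f : ℝ → ℝ) (x y : ℝ) : ℝ := (u (x + omg n * y) - f x) / omg n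

/-- The oblique translation with parameter `τ` of the canonical `(H,V)`-staircase. -/
noncomputable def obliqueStair (H V τ y : ℝ) : ℝ := canStair H V (y - H * τ) + V * τ

/-- The points where `obliqueStair H V τ` jumps (if `V ≠ 0`). -/
def stairBreaks (H τ : ℝ) : Set ℝ := range fun k : ℤ => H * (τ + 2 * k - 1)

/-- On `[-1/ε, 1/ε]` and off the `ε`-neighbourhood of the exceptional set `B`, the function `v` is
`ε`-close to `w`; on subintervals of `[-1/ε, 1/ε]` its total variation exceeds the distance of the
values at the endpoints by at most `ε`. -/
structure CloseTo (B : Set ℝ) (w v : ℝ → ℝ) (ε : ℝ) : Prop where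
  abs_sub_le : ∀ y, |y| ≤ 1 / ε → (∀ z ∈ B, ε ≤ |y - z|) → |v y - w y| ≤ ε
  eVariationOn_le : ∀ r s, |r| ≤ 1 / ε → |s| ≤ 1 / ε → r ≤ s →
    eVariationOn v (Icc r s) ≤ ENNReal.ofReal (|v s - v r| + ε)

/-- The point at distance `H τ ω(n)` to the left of the midpoint of the piece with index `m`. -/
noncomputable def blowupCentre (n : ℕ) (b : ℕ → ℕ) (m : ℕ) (H τ : ℝ) : ℝ :=
  blockMid n (b m) (b (m + 1)) - H * τ * omg n

lemma obliqueStair_of_mem_Ico {H V τ y : ℝ} (hH : 0 < H) {k : ℤ}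
    (hy : y ∈ Ico (H * (τ + 2 * k - 1)) (H * (τ + 2 * k + 1))) :
    obliqueStair H V τ y = V * (τ + 2 * k) := by
  have hfloor : ⌊((y - H * τ) / H + 1) / 2⌋ = k := by
    rw [Int.floor_eq_iff, le_div_iff₀ two_pos, div_lt_iff₀ two_pos, ← sub_le_iff_le_add,
      ← lt_sub_iff_add_lt, le_div_iff₀ hH, div_lt_iff₀ hH]
    constructor <;> linarith [hy.1, hy.2]
  rw [obliqueStair, canStair, stairS, hfloor]
  ring

lemma natFloor_mul_mem_Ico {n p q : ℕ} (hn : 0 < n) {x : ℝ}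
    (hx : x ∈ Ico ((p : ℝ) / n) ((q : ℝ) / n)) : ⌊(n : ℝ) * x⌋₊ ∈ Ico p q := by
  have hn' : (0 : ℝ) < n := Nat.cast_pos.2 hn
  have hx0 : 0 ≤ x := le_trans (by positivity) hx.1
  exact ⟨Nat.le_floor ((div_le_iff₀' hn').1 hx.1),
    (Nat.floor_lt (by positivity)).2 ((lt_div_iff₀' hn').1 hx.2)⟩

lemma IsPC.eq_natFloor {n : ℕ} (hn : 0 < n) {u : ℝ → ℝ} (hu : IsPC (1 / (n : ℝ)) u) {x : ℝ}
    (hx : 0 ≤ x) : u x = u ((⌊(n : ℝ) * x⌋₊ : ℝ) / n) := by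
  rw [hu.eq_floor hn x, natCast_floor_eq_intCast_floor (by positivity)]

section Variation

lemma eVariationOn_nat_Icc {E : Type*} [PseudoEMetricSpace E] (U : ℕ → E) {p q : ℕ} (hpq : p ≤ q) :
    eVariationOn U (Icc p q) = ∑ i ∈ Finset.Ico p q, edist (U i) (U (i + 1)) := by
  rw [Finset.sum_Ico_eq_sum_range]
  have hsum := eVariationOn.sum' U (I := fun i => p + i) (fun i j h => Nat.add_le_add_left h p)
    (n := q - p)
  rw [add_zero, Nat.add_sub_cancel' hpq] at hsum
  rw [← hsum]
  refine Finset.sum_congr rfl fun i _ => ?_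
  rw [← eVariationOn.pair, ← add_assoc]
  congr 1
  ext j
  simp only [mem_Icc, mem_insert_iff, mem_singleton_iff]
  omega

/-- If all large transitions have the sign `σ`, only the small ones make the variation exceed the
distance of the values at the endpoints. -/
lemma eVariationOn_nat_Icc_le_of_largeJump_sign {n p q : ℕ} {t σ : ℝ} {U : ℕ → ℝ} (hpq : p ≤ q)
    (hσ : |σ| = 1)
    (hsign : ∀ i ∈ Ico p q, LargeJump n t U (i + 1) → 0 ≤ σ * (U (i + 1) - U i)) :
    eVariationOn U (Icc p q) ≤ ENNReal.ofReal (|U q - U p| + 2 * smallVar n t U p (q + 1)) := by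
  classical
  have hterm : ∀ i ∈ Finset.Ico p q, dist (U i) (U (i + 1)) ≤
      σ * (U (i + 1) - U i) + 2 * if ¬LargeJump n t U (i + 1) then |U (i + 1) - U i| else 0 := by
    intro i hi
    have habs : |σ * (U (i + 1) - U i)| = dist (U i) (U (i + 1)) := by
      rw [abs_mul, hσ, one_mul, dist_comm, Real.dist_eq]
    by_cases h : LargeJump n t U (i + 1)
    · rw [← habs, abs_of_nonneg (hsign i (Finset.mem_Ico.1 hi) h), if_neg (not_not.2 h)]
      simp
    · rw [if_pos h, ← Real.dist_eq, dist_comm (U (i + 1))]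
      linarith [neg_abs_le (σ * (U (i + 1) - U i))]
  have hend : σ * (U q - U p) ≤ |U q - U p| := by
    simpa [abs_mul, hσ] using le_abs_self (σ * (U q - U p))
  rw [eVariationOn_nat_Icc U hpq]
  simp only [edist_dist]
  rw [← ENNReal.ofReal_sum_of_nonneg fun _ _ => dist_nonneg]
  refine ENNReal.ofReal_le_ofReal ((Finset.sum_le_sum hterm).trans ?_)
  rw [Finset.sum_add_distrib, ← Finset.mul_sum, ← Finset.mul_sum, Finset.sum_Ico_sub U hpq,
    ← Finset.sum_filter]
  exact add_le_add_left hend _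

lemma eVariationOn_sub_div_comp_le {E : Type*} [LinearOrder E] {U : ℕ → ℝ} {φ : E → ℕ} {r s : E}
    (hφ : Monotone φ) {ω : ℝ} (hω : 0 < ω) (c : ℝ) :
    eVariationOn (fun y => (U (φ y) - c) / ω) (Icc r s) ≤
      ENNReal.ofReal (1 / ω) * eVariationOn U (Icc (φ r) (φ s)) := by
  have hlip : LipschitzWith (1 / ω).toNNReal fun x : ℝ => (x - c) / ω := by
    refine LipschitzWith.of_dist_le_mul fun x y => le_of_eq ?_
    rw [Real.dist_eq, Real.dist_eq, Real.coe_toNNReal _ (by positivity), ← sub_div,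
      sub_sub_sub_cancel_right, abs_div, abs_of_pos hω, one_div_mul_eq_div]
  refine ((hlip.lipschitzOnWith (s := univ)).comp_eVariationOn_le (g := U ∘ φ)
    fun _ _ => mem_univ _).trans (mul_le_mul_right ?_ _)
  exact eVariationOn.comp_le_of_monotoneOn U φ (hφ.monotoneOn _)
    fun y hy => ⟨hφ hy.1, hφ hy.2⟩

end Variation

namespace RegularRun

variable {n m K : ℕ} {t M H η τ ε : ℝ} {f : ℝ → ℝ} {U : ℕ → ℝ} {u : ℝ → ℝ} {b : ℕ → ℕ}

lemma error_nonneg (h : RegularRun n t U f M H η K b) : 0 ≤ η * omg n :=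
  (Finset.sum_nonneg fun _ _ => abs_nonneg _).trans h.smallVar_le

lemma abs_sub_sub_le (h : RegularRun n t U f M H η K b) {i j d : ℕ} (hi : i ≤ K) (hj : j ≤ K)
    (hij : i ≤ j + d) (hji : j ≤ i + d) :
    |(b i : ℝ) / n - b j / n - 2 * H * (i - j) * omg n| ≤ d * (η * omg n) := by
  wlog hle : i ≤ j generalizing i j
  · rw [← abs_neg]
    convert this hj hi hji hij (le_of_not_ge hle) using 2
    ring
  have hdist := dist_le_Ico_sum_of_dist_le (f := fun l => (b l : ℝ) / n - 2 * H * omg n * l)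
    (d := fun _ => η * omg n) hle fun {l} _ hl => by
      rw [dist_comm, Real.dist_eq]
      convert h.abs_length_sub_le l (by omega) using 2
      push_cast
      ring
  rw [Finset.sum_const, Nat.card_Ico, nsmul_eq_mul, Real.dist_eq] at hdist
  refine le_trans (le_of_eq ?_) (hdist.trans (mul_le_mul_of_nonneg_right ?_ h.error_nonneg))
  · congr 1
    ring
  · exact_mod_cast Nat.sub_le_iff_le_add'.2 hji

lemma abs_break_sub_le (h : RegularRun n t U f M H η (2 * m + 1) b) {l : ℕ}
    (hl : l ≤ 2 * m + 1) :
    |(b l : ℝ) / n - blowupCentre n b m H τ - H * (τ + 2 * (l - m) - 1) * omg n| ≤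
      (m + 1) * η * omg n := by
  have h0 := abs_le.1 (h.abs_sub_sub_le (d := m + 1) hl (j := m) (by omega) (by omega) (by omega))
  have h1 := abs_le.1
    (h.abs_sub_sub_le (d := m + 1) hl (j := m + 1) (by omega) (by omega) (by omega))
  push_cast at h0 h1
  rw [blowupCentre, blockMid, abs_le]
  constructor <;> linarith [h0.1, h0.2, h1.1, h1.2]

lemma mem_Ico_of_abs_le (h : RegularRun n t U f M H η (2 * m + 1) b) (hH : 0 ≤ H) {R y : ℝ}
    (hy : |y| ≤ R) (hR : R + (m + 1) * η < H * (2 * m + 1 - |τ|)) (hn : 2 ≤ n) :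
    blowupCentre n b m H τ + omg n * y ∈
      Ico ((b 0 : ℝ) / n) ((b (2 * m + 1) : ℝ) / n) := by
  have hω := omg_pos hn
  have hleft := abs_le.1 (h.abs_break_sub_le (τ := τ) (Nat.zero_le _))
  have hright := abs_le.1 (h.abs_break_sub_le (τ := τ) le_rfl)
  have hτ := abs_le.1 ((abs_mul H τ).trans_le (by rw [abs_of_nonneg hH]))
  have hy := abs_le.1 hy
  push_cast at hleft hright
  have hl : 0 ≤ omg n * (y - (H * (τ - 2 * m - 1) + (m + 1) * η)) :=
    mul_nonneg hω.le (by linarith [hτ.1, hτ.2, hy.1])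
  have hr : 0 < omg n * (H * (τ + 2 * m + 1) - (m + 1) * η - y) :=
    mul_pos hω (by linarith [hτ.1, hτ.2, hy.2])
  constructor
  · linarith [hleft.2]
  · linarith [hright.1]

lemma mem_Ioo_stair_of_mem_Ico (h : RegularRun n t U f M H η (2 * m + 1) b) (hn : 2 ≤ n) {l : ℕ}
    (hl : l < 2 * m + 1) {y : ℝ} (hB : ∀ z ∈ stairBreaks H τ, (m + 1) * η < |y - z|)
    (hy : blowupCentre n b m H τ + omg n * y ∈ Ico ((b l : ℝ) / n) ((b (l + 1) : ℝ) / n)) :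
    y ∈ Ioo (H * (τ + 2 * (l - m) - 1)) (H * (τ + 2 * (l - m) + 1)) := by
  have hω := omg_pos hn
  have hleft := abs_le.1 (h.abs_break_sub_le (τ := τ) hl.le)
  have hright := abs_le.1 (h.abs_break_sub_le (τ := τ) (Nat.succ_le_of_lt hl))
  have hBl := hB _ ⟨(l : ℤ) - m, rfl⟩
  have hBr := hB _ ⟨(l : ℤ) - m + 1, rfl⟩
  push_cast at hright hBl hBr
  constructor
  · by_contra! hle
    rw [abs_of_nonpos (by linarith)] at hBl
    nlinarith [hleft.1, hy.1]
  · by_contra! hle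
    rw [abs_of_nonneg (by linarith)] at hBr
    nlinarith [hright.2, hy.2]

lemma abs_sub_le_of_mem_Ico (h : RegularRun n t (fun i => u ((i : ℝ) / n)) f M H η K b)
    (hn : 0 < n) (hu : IsPC (1 / (n : ℝ)) u) {l : ℕ} (hl : l < K) {x : ℝ}
    (hx : x ∈ Ico ((b l : ℝ) / n) ((b (l + 1) : ℝ) / n)) :
    |u x - f (blockMid n (b l) (b (l + 1)))| ≤ 2 * η * omg n := by
  rw [hu.eq_natFloor hn (le_trans (by positivity) hx.1)]
  refine (abs_sub_le _ (u ((b l : ℝ) / n)) _).trans ?_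
  linarith [(h.breaks.abs_sub_le_smallVar hl (natFloor_mul_mem_Ico hn hx)).trans h.smallVar_le,
    h.abs_offset_le l hl]

lemma abs_blowup_sub_le (h : RegularRun n t (fun i => u ((i : ℝ) / n)) f M H η (2 * m + 1) b)
    (hn : 2 ≤ n) (hu : IsPC (1 / (n : ℝ)) u)
    (hc : blowupCentre n b m H τ ∈ Icc ((b 0 : ℝ) / n) ((b (2 * m + 1) : ℝ) / n)) {l : ℕ}
    (hl : l < 2 * m + 1) {y : ℝ}
    (hy : blowupCentre n b m H τ + omg n * y ∈ Ico ((b l : ℝ) / n) ((b (l + 1) : ℝ) / n)) :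
    |blowup n u f (blowupCentre n b m H τ) y - M * H * (τ + 2 * (l - m))| ≤
      3 * η + |M| * ((m + 1) * η) := by
  have hω := omg_pos hn
  set x := blowupCentre n b m H τ
  set c := blockMid n (b l) (b (l + 1)) with hcdef
  have hval := abs_le.1 (h.abs_sub_le_of_mem_Ico (by omega) hu hl hy)
  have haff := abs_le.1 (h.nearAffineOn c (h.breaks.Icc_div_subset n l.le_succ hl
    (blockMid_mem_Icc n (h.breaks.le l.le_succ hl))) x hc)
  have hmid : |c - x - H * (τ + 2 * (l - m)) * omg n| ≤ (m + 1) * η * omg n := by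
    have hleft := abs_le.1 (h.abs_break_sub_le (τ := τ) hl.le)
    have hright := abs_le.1 (h.abs_break_sub_le (τ := τ) (Nat.succ_le_of_lt hl))
    push_cast at hright
    rw [hcdef, blockMid, abs_le]
    constructor <;> linarith [hleft.1, hleft.2, hright.1, hright.2]
  have hMmid := (abs_mul M _).trans_le (mul_le_mul_of_nonneg_left hmid (abs_nonneg M))
  rw [blowup, div_sub' hω.ne', abs_div, abs_of_pos hω, div_le_iff₀ hω, abs_le]
  have hMmid := abs_le.1 hMmid
  constructor <;> linarith [hval.1, hval.2, haff.1, haff.2, hMmid.1, hMmid.2]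

lemma abs_jump_sub_le (h : RegularRun n t U f M H η K b) {j : ℕ} (hj : j + 1 < K) :
    |U (b (j + 1)) - U (b (j + 1) - 1) -
      M * (blockMid n (b (j + 1)) (b (j + 2)) - blockMid n (b j) (b (j + 1)))| ≤
      4 * η * omg n := by
  have hlt : b j < b (j + 1) := h.breaks.lt j.lt_succ_self hj.le
  have hmem (i : ℕ) (hi : i < K) : blockMid n (b i) (b (i + 1)) ∈
      Icc ((b 0 : ℝ) / n) ((b K : ℝ) / n) :=
    h.breaks.Icc_div_subset n i.le_succ hi (blockMid_mem_Icc n (h.breaks.le i.le_succ hi))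
  have hvar := abs_le.1 ((h.breaks.abs_sub_le_smallVar (j := j) (i := b (j + 1) - 1) (by omega)
    ⟨by omega, by omega⟩).trans h.smallVar_le)
  have hoff := abs_le.1 (h.abs_offset_le j (by omega))
  have hoff' := abs_le.1 (h.abs_offset_le (j + 1) hj)
  have haff := abs_le.1 (h.nearAffineOn _ (hmem (j + 1) hj) _ (hmem j (by omega)))
  rw [abs_le]
  constructor <;>
    linarith [hvar.1, hvar.2, hoff.1, hoff.2, hoff'.1, hoff'.2, haff.1, haff.2]

lemma mul_jump_nonneg (h : RegularRun n t U f M H η K b) (hηH : η ≤ H) (hη : 4 * η ≤ |M| * H)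
    {j : ℕ} (hj : j + 1 < K) : 0 ≤ M * (U (b (j + 1)) - U (b (j + 1) - 1)) := by
  have hω := omg_nonneg n
  set D := blockMid n (b (j + 1)) (b (j + 2)) - blockMid n (b j) (b (j + 1)) with hD
  set J := U (b (j + 1)) - U (b (j + 1) - 1)
  have hDge : H * omg n ≤ D := by
    rw [hD, blockMid, blockMid]
    linarith [(abs_le.1 (h.abs_length_sub_le j (by omega))).1,
      (abs_le.1 (h.abs_length_sub_le (j + 1) hj)).1, mul_le_mul_of_nonneg_right hηH hω]
  have hjump : |M * (J - M * D)| ≤ |M| * (4 * η * omg n) :=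
    (abs_mul _ _).trans_le (mul_le_mul_of_nonneg_left (h.abs_jump_sub_le hj) (abs_nonneg M))
  have hmain : |M| * (4 * η * omg n) ≤ M ^ 2 * D := by
    rw [← sq_abs, sq, mul_assoc |M| |M| D]
    refine mul_le_mul_of_nonneg_left ?_ (abs_nonneg M)
    calc 4 * η * omg n ≤ |M| * H * omg n := mul_le_mul_of_nonneg_right hη hω
      _ ≤ |M| * D := by rw [mul_assoc]; exact mul_le_mul_of_nonneg_left hDge (abs_nonneg M)
  linarith [(abs_le.1 hjump).1]

lemma exists_sign (h : RegularRun n t U f M H η K b) (hηH : η ≤ H)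
    (hK : K = 1 ∨ M ≠ 0 ∧ 4 * η ≤ |M| * H) :
    ∃ σ : ℝ, |σ| = 1 ∧
      ∀ i ∈ Ioo (b 0) (b K), LargeJump n t U i → 0 ≤ σ * (U i - U (i - 1)) := by
  rcases hK with rfl | ⟨hM, hη⟩
  · refine ⟨1, abs_one, fun i hi hP => ?_⟩
    obtain ⟨j, hj0, hj1, -⟩ := h.breaks.eq_of_mem_Ioo hi hP
    omega
  · refine ⟨M / |M|, by rw [abs_div, abs_abs, div_self (abs_ne_zero.2 hM)], fun i hi hP => ?_⟩
    obtain ⟨j, hj0, hjK, rfl⟩ := h.breaks.eq_of_mem_Ioo hi hP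
    obtain ⟨j, rfl⟩ := Nat.exists_eq_add_one.2 hj0
    rw [div_mul_eq_mul_div]
    exact div_nonneg (h.mul_jump_nonneg hηH hη hjK) (abs_nonneg M)

lemma eVariationOn_blowup_le (h : RegularRun n t (fun i => u ((i : ℝ) / n)) f M H η K b)
    (hn : 2 ≤ n) (hu : IsPC (1 / (n : ℝ)) u) (hηH : η ≤ H)
    (hK : K = 1 ∨ M ≠ 0 ∧ 4 * η ≤ |M| * H) {x r s : ℝ} (hrs : r ≤ s)
    (hr : x + omg n * r ∈ Ico ((b 0 : ℝ) / n) ((b K : ℝ) / n))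
    (hs : x + omg n * s ∈ Ico ((b 0 : ℝ) / n) ((b K : ℝ) / n)) :
    eVariationOn (blowup n u f x) (Icc r s) ≤
      ENNReal.ofReal (|blowup n u f x s - blowup n u f x r| + 2 * η) := by
  have hω := omg_pos hn
  have hn0 : 0 < n := by omega
  set U : ℕ → ℝ := fun i => u ((i : ℝ) / n) with hU
  set φ : ℝ → ℕ := fun y => ⌊(n : ℝ) * (x + omg n * y)⌋₊ with hφdef
  have hφ : Monotone φ := fun y z hyz => by
    simp only [hφdef]
    gcongr
  have hb0 : 0 ≤ x + omg n * r := le_trans (by positivity) hr.1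
  have hblowup : EqOn (blowup n u f x) (fun y => (U (φ y) - f x) / omg n) (Icc r s) :=
    fun y hy => by
      simp only [blowup, hU, hφdef]
      rw [hu.eq_natFloor hn0 (hb0.trans (by gcongr; exact hy.1))]
  have hφr : φ r ∈ Ico (b 0) (b K) := natFloor_mul_mem_Ico hn0 hr
  have hφs : φ s ∈ Ico (b 0) (b K) := natFloor_mul_mem_Ico hn0 hs
  obtain ⟨σ, hσ, hsign⟩ := h.exists_sign hηH hK
  have hsmall : smallVar n t U (φ r) (φ s + 1) ≤ η * omg n :=
    (smallVar_mono hφr.1 hφs.2).trans h.smallVar_le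
  rw [eVariationOn.congr hblowup, hblowup (left_mem_Icc.2 hrs), hblowup (right_mem_Icc.2 hrs)]
  refine (eVariationOn_sub_div_comp_le hφ hω (f x)).trans ?_
  refine (mul_le_mul_right (eVariationOn_nat_Icc_le_of_largeJump_sign (hφ hrs) hσ
    fun i hi => hsign (i + 1) ⟨?_, ?_⟩) _).trans ?_
  · exact Nat.lt_succ_of_le (hφr.1.trans hi.1)
  · exact lt_of_le_of_lt hi.2 hφs.2
  · rw [← ENNReal.ofReal_mul (by positivity)]
    refine ENNReal.ofReal_le_ofReal ?_
    rw [← sub_div, sub_sub_sub_cancel_right, abs_div, abs_of_pos hω, one_div_mul_eq_div, add_div]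
    refine add_le_add_right ((div_le_iff₀ hω).2 ?_) _
    linarith

lemma closeTo (h : RegularRun n t (fun i => u ((i : ℝ) / n)) f M H η (2 * m + 1) b)
    (hn : 2 ≤ n) (hu : IsPC (1 / (n : ℝ)) u) (hH : 0 < H) (hηH : η ≤ H)
    (hK : 2 * m + 1 = 1 ∨ M ≠ 0 ∧ 4 * η ≤ |M| * H) (hε : 0 < ε)
    (hcov : 1 / ε + (m + 1) * η < H * (2 * m + 1 - |τ|)) (hηε : (3 + |M|) * ((m + 1) * η) < ε) :
    blowupCentre n b m H τ ∈ Icc ((b 0 : ℝ) / n) ((b (2 * m + 1) : ℝ) / n) ∧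
      CloseTo (stairBreaks H τ) (obliqueStair H (M * H) τ)
        (blowup n u f (blowupCentre n b m H τ)) ε := by
  have hη : 0 ≤ η := nonneg_of_mul_nonneg_left h.error_nonneg (omg_pos hn)
  have hmη : η ≤ (m + 1) * η := le_mul_of_one_le_left hη (by simp)
  have hMη : 0 ≤ |M| * ((m + 1) * η) := by positivity
  have hmem {y : ℝ} (hy : |y| ≤ 1 / ε) := h.mem_Ico_of_abs_le hH.le hy hcov hn
  have hc : blowupCentre n b m H τ ∈ Icc ((b 0 : ℝ) / n) ((b (2 * m + 1) : ℝ) / n) := by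
    simpa using Ico_subset_Icc_self (hmem (y := 0) (by rw [abs_zero]; positivity))
  refine ⟨hc, fun y hy hB => ?_, fun r s hr hs hrs => ?_⟩
  · obtain ⟨l, hl, hly⟩ := exists_mem_Ico_succ (b := fun l => (b l : ℝ) / n) (hmem hy)
    have hstair := h.mem_Ioo_stair_of_mem_Ico hn hl
      (fun z hz => lt_of_lt_of_le (by linarith) (hB z hz)) hly
    have hval := obliqueStair_of_mem_Ico (V := M * H) (k := (l : ℤ) - m) hH
      (by push_cast; exact Ioo_subset_Ico_self hstair)
    push_cast at hval
    rw [hval]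
    linarith [h.abs_blowup_sub_le hn hu hc hl hly]
  · refine (h.eVariationOn_blowup_le hn hu hηH hK hrs (hmem hr) (hmem hs)).trans
      (ENNReal.ofReal_le_ofReal ?_)
    linarith

lemma exists_closeTo (h : RegularRun n t (fun i => u ((i : ℝ) / n)) f M H η (2 * m + 1) b)
    (hn : 2 ≤ n) (hu : IsPC (1 / (n : ℝ)) u) (hH : 0 < H) (hηH : η ≤ H)
    (hK : 2 * m + 1 = 1 ∨ M ≠ 0 ∧ 4 * η ≤ |M| * H) (hε : 0 < ε)
    (hcov : 1 / ε + (m + 1) * η < H * (2 * m + 1 - |τ|)) (hηε : (3 + |M|) * ((m + 1) * η) < ε)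
    {k : ℕ} (hb : 0 < b 0) (hbk : b (2 * m + 1) ≤ k) (hk : k < n) :
    ∃ x ∈ Ioo (0 : ℝ) 1, x ≤ k / n ∧
      CloseTo (stairBreaks H τ) (obliqueStair H (M * H) τ) (blowup n u f x) ε := by
  have hn' : (0 : ℝ) < n := by positivity
  obtain ⟨hc, hclose⟩ := h.closeTo hn hu hH hηH hK hε hcov hηε
  have hck := hc.2.trans (natCast_div_le_natCast_div n hbk)
  exact ⟨_, ⟨lt_of_lt_of_le (by positivity) hc.1,
    hck.trans_lt ((div_lt_one hn').2 (Nat.cast_lt.2 hk))⟩, hck, hclose⟩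

end RegularRun

/-! ### Existence of good centres -/

section GoodCentres

variable {β M H τ xinf ε : ℝ} {f : ℝ → ℝ} {k : ℕ → ℕ} {u : ℕ → ℝ → ℝ}

lemma eventually_isDiscreteMinimizer (hf : ContinuousOn f (Icc 0 1))
    (hu : ∀ n, 2 ≤ n → IsMinimizer n β f (u n)) :
    ∀ᶠ n in atTop, IsDiscreteMinimizer n β f fun i => u n ((i : ℝ) / n) := by
  filter_upwards [eventually_ge_atTop 2] with n hn
  exact (hu n hn).isDiscreteMinimizer (by omega) hf

lemma eventually_exists_closeTo_obliqueStair (hβ : 0 < β) (hf : ContinuousOn f (Icc 0 1))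
    (hM : HasStrictDerivAt f M xinf) (hM0 : M ≠ 0) (hxinf : xinf ∈ Ioo (0 : ℝ) 1)
    (hx : Tendsto (fun n => (k n : ℝ) / n) atTop (nhds xinf))
    (hu : ∀ n, 2 ≤ n → IsMinimizer n β f (u n)) (hH : 0 < H) (hMH : β * M ^ 2 * H ^ 3 = 1)
    (hτ : |τ| ≤ 1) (hε : 0 < ε) :
    ∀ᶠ n in atTop, ∃ x ∈ Ioo (0 : ℝ) 1, x ≤ k n / n ∧
      CloseTo (stairBreaks H τ) (obliqueStair H (M * H) τ) (blowup n (u n) f x) ε := by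
  obtain ⟨m, hm⟩ := exists_nat_gt ((1 / ε + H) / (2 * H))
  rw [div_lt_iff₀ (by positivity)] at hm
  have : 0 < |M| := abs_pos.2 hM0
  set θ := min H (min (|M| * H / 4) (ε / 2 / (3 + |M|))) with hθ
  have hθ0 : 0 < θ := by positivity
  obtain ⟨hθH, hθM, hθε⟩ : θ ≤ H ∧ θ ≤ |M| * H / 4 ∧ θ ≤ ε / 2 / (3 + |M|) := by
    simpa only [le_min_iff] using hθ.le
  rw [le_div_iff₀' (by positivity)] at hθM hθε
  have hmθ : ((m : ℝ) + 1) * (θ / (m + 1)) = θ := mul_div_cancel₀ θ (by positivity)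
  have hηθ : θ / (m + 1) ≤ θ := div_le_self hθ0.le (by simp)
  have hτH : H * |τ| ≤ H := mul_le_of_le_one_right hH.le hτ
  filter_upwards [eventually_exists_regularRun (U := fun n i => u n ((i : ℝ) / n)) hβ hf hM hxinf
    hx (eventually_isDiscreteMinimizer hf hu) hH hMH (2 * m + 1) (by positivity : 0 < θ / (m + 1)),
    eventually_ge_atTop 2, eventually_lt_of_tendsto_div hx hxinf.2]
    with n ⟨t, b, hrun, hb, hbk⟩ hn hk
  refine hrun.exists_closeTo hn (hu n hn).1 hH (by linarith) (Or.inr ⟨hM0, by linarith⟩) hε ?_ ?_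
    hb hbk hk
  · rw [hmθ]
    linarith
  · rw [hmθ]
    linarith

lemma eventually_exists_closeTo_zero (hβ : 0 < β) (hf : ContinuousOn f (Icc 0 1))
    (hM : HasStrictDerivAt f 0 xinf) (hxinf : xinf ∈ Ioo (0 : ℝ) 1)
    (hx : Tendsto (fun n => (k n : ℝ) / n) atTop (nhds xinf))
    (hu : ∀ n, 2 ≤ n → IsMinimizer n β f (u n)) (hε : 0 < ε) :
    ∀ᶠ n in atTop, ∃ x ∈ Ioo (0 : ℝ) 1, x ≤ k n / n ∧
      CloseTo ∅ (fun _ => 0) (blowup n (u n) f x) ε := by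
  set H := 1 / ε + ε + 1
  have hR : 0 < 1 / ε := by positivity
  have hH : 0 < H := by positivity
  filter_upwards [eventually_exists_regularRun_of_slope_zero (U := fun n i => u n ((i : ℝ) / n))
    hβ hf hM hxinf hx (eventually_isDiscreteMinimizer hf hu) hH (by positivity : 0 < ε / 4),
    eventually_ge_atTop 2, eventually_lt_of_tendsto_div hx hxinf.2]
    with n ⟨t, b, hrun, hb, hbk⟩ hn hk
  obtain ⟨x, hx01, hxk, hclose⟩ := RegularRun.exists_closeTo (m := 0) (τ := 0) hrun hn (hu n hn).1
    hH (by linarith) (Or.inl rfl) hε (by rw [Nat.cast_zero, abs_zero]; linarith)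
    (by rw [Nat.cast_zero, abs_zero]; linarith) hb hbk hk
  refine ⟨x, hx01, hxk, fun y hy _ => ?_, hclose.eVariationOn_le⟩
  have hfar : ∀ z ∈ stairBreaks H 0, ε ≤ |y - z| := by
    rintro _ ⟨j, rfl⟩
    have hj : (1 : ℝ) ≤ |2 * (j : ℝ) - 1| := by
      exact_mod_cast Int.one_le_abs (by omega : 2 * j - 1 ≠ 0)
    have hHj : H ≤ |H * (0 + 2 * (j : ℝ) - 1)| := by
      rw [zero_add, abs_mul, abs_of_pos hH]
      exact le_mul_of_one_le_right hH.le hj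
    linarith [abs_sub_abs_le_abs_sub (H * (0 + 2 * (j : ℝ) - 1)) y, abs_sub_comm y
      (H * (0 + 2 * (j : ℝ) - 1))]
  have hzero : obliqueStair H (0 * H) 0 y = 0 := by simp [obliqueStair, canStair]
  rw [← hzero]
  exact hclose.abs_sub_le y hy hfar

end GoodCentres

lemma CloseTo.mono {B : Set ℝ} {w v : ℝ → ℝ} {ε ε' : ℝ} (h : CloseTo B w v ε) (hε : 0 < ε)
    (hle : ε ≤ ε') : CloseTo B w v ε' := by
  have hR : 1 / ε' ≤ 1 / ε := one_div_le_one_div_of_le hε hle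
  refine ⟨fun y hy hB => ?_, fun r s hr hs hrs => ?_⟩
  · exact (h.abs_sub_le y (hy.trans hR) fun z hz => hle.trans (hB z hz)).trans hle
  · exact (h.eVariationOn_le r s (hr.trans hR) (hs.trans hR) hrs).trans
      (ENNReal.ofReal_le_ofReal (by linarith))

/-- The diagonal point for `n` is taken at the smallest tolerance `1 / (m + 1)`, `m ≤ n`, that is
attainable for `n`. -/
lemma exists_diagonal {α : Type*} {P : ℕ → ℝ → α → Prop} {s : Set α} (hs : s.Nonempty)
    (hmono : ∀ n x ε ε', P n ε x → 0 < ε → ε ≤ ε' → P n ε' x)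
    (hP : ∀ ε > 0, ∀ᶠ n in atTop, ∃ x ∈ s, P n ε x) :
    ∃ x : ℕ → α, (∀ n, x n ∈ s) ∧ ∀ ε > 0, ∀ᶠ n in atTop, P n ε (x n) := by
  classical
  set G : ℕ → ℕ → Prop := fun n m => ∃ x ∈ s, P n (1 / ((m : ℝ) + 1)) x
  have hchoice (n : ℕ) : ∃ x ∈ s, G n (Nat.findGreatest (G n) n) →
      P n (1 / ((Nat.findGreatest (G n) n : ℝ) + 1)) x := by
    by_cases h : G n (Nat.findGreatest (G n) n)
    · obtain ⟨x, hx, hPx⟩ := h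
      exact ⟨x, hx, fun _ => hPx⟩
    · obtain ⟨x, hx⟩ := hs
      exact ⟨x, hx, fun h' => absurd h' h⟩
  choose x hx hPx using hchoice
  refine ⟨x, hx, fun ε hε => ?_⟩
  obtain ⟨m, hm⟩ := exists_nat_one_div_lt hε
  filter_upwards [hP (1 / ((m : ℝ) + 1)) (by positivity), eventually_ge_atTop m] with n hGm hmn
  have hle : m ≤ Nat.findGreatest (G n) n := Nat.le_findGreatest hmn hGm
  refine hmono n _ _ _ (hPx n (Nat.findGreatest_spec hmn hGm)) (by positivity) ?_
  exact (one_div_le_one_div_of_le (by positivity) (by gcongr)).trans hm.le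

/-! ### Strict convergence towards monotone functions -/

section Strict

variable {a b : ℝ} {B : Set ℝ} {w : ℝ → ℝ} {v : ℕ → ℝ → ℝ}

lemma eVariationOn_Icc_of_monotone_or_antitone (hw : Monotone w ∨ Antitone w) (hab : a ≤ b) :
    eVariationOn w (Icc a b) = edist (w a) (w b) := by
  wlog hmono : Monotone w generalizing w
  · have hneg := (hw.resolve_left hmono).neg
    simpa [eVariationOn, edist_neg_neg] using this (Or.inl hneg) hneg
  · have hvar := (hmono.monotoneOn (Icc a b)).eVariationOn_eq (left_mem_Icc.2 hab)
      (right_mem_Icc.2 hab)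
    rw [inter_self] at hvar
    rw [hvar, edist_comm, edist_dist, Real.dist_eq, abs_of_nonneg (sub_nonneg.2 (hmono hab))]

lemma countable_not_continuousAt_of_monotone_or_antitone (hw : Monotone w ∨ Antitone w) :
    {y | ¬ContinuousAt w y}.Countable :=
  hw.elim Monotone.countable_not_continuousAt Antitone.countable_not_continuousAt

lemma exists_mem_Ioo_lt_edist {E : Type*} [PseudoEMetricSpace E] {w : ℝ → E} (hab : a < b)
    (ha : ContinuousAt w a) (hb : ContinuousAt w b) {s : Set ℝ} (hsa : s ∈ nhds a)
    (hsb : s ∈ nhds b) {c : ENNReal} (hc : c < edist (w a) (w b)) :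
    ∃ x ∈ Ioo a b ∩ s, ∃ y ∈ Ioo a b ∩ s, c < edist (w x) (w y) := by
  have hlim : Tendsto (fun p : ℝ × ℝ => edist (w p.1) (w p.2))
      (nhdsWithin a (Ioi a) ×ˢ nhdsWithin b (Iio b)) (nhds (edist (w a) (w b))) :=
    ((ha.tendsto.mono_left nhdsWithin_le_nhds).comp tendsto_fst).edist
      ((hb.tendsto.mono_left nhdsWithin_le_nhds).comp tendsto_snd)
  have hxy : ∀ᶠ p in nhdsWithin a (Ioi a) ×ˢ nhdsWithin b (Iio b),
      p.1 ∈ Ioo a b ∩ s ∧ p.2 ∈ Ioo a b ∩ s :=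
    prod_mem_prod (inter_mem (Ioo_mem_nhdsGT hab) (mem_nhdsWithin_of_mem_nhds hsa))
      (inter_mem (Ioo_mem_nhdsLT hab) (mem_nhdsWithin_of_mem_nhds hsb))
  obtain ⟨p, ⟨hx, hy⟩, hlt⟩ := (hxy.and (hlim.eventually_const_lt hc)).exists
  exact ⟨p.1, hx, p.2, hy, hlt⟩

lemma eVariationOn_Ioo_of_monotone_or_antitone (hw : Monotone w ∨ Antitone w) (hab : a < b)
    (ha : ContinuousAt w a) (hb : ContinuousAt w b) :
    eVariationOn w (Ioo a b) = edist (w a) (w b) := by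
  refine le_antisymm ((eVariationOn.mono w Ioo_subset_Icc_self).trans_eq
    (eVariationOn_Icc_of_monotone_or_antitone hw hab.le)) (le_of_forall_lt fun c hc => ?_)
  obtain ⟨x, hx, y, hy, hlt⟩ := exists_mem_Ioo_lt_edist hab ha hb univ_mem univ_mem hc
  exact hlt.trans_le (eVariationOn.edist_le w hx.1 hy.1)

lemma tendsto_eVariationOn_Ioo (hw : Monotone w ∨ Antitone w) (hab : a < b)
    (ha : ContinuousAt w a) (hb : ContinuousAt w b) (hB : IsClosed B) (haB : a ∉ B) (hbB : b ∉ B)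
    (hlim : ∀ y ∉ B, Tendsto (fun n => v n y) atTop (nhds (w y)))
    (hvar : ∀ δ > 0, ∀ᶠ n in atTop,
      eVariationOn (v n) (Icc a b) ≤ ENNReal.ofReal (dist (w a) (w b) + δ)) :
    Tendsto (fun n => eVariationOn (v n) (Ioo a b)) atTop (nhds (eVariationOn w (Ioo a b))) := by
  rw [eVariationOn_Ioo_of_monotone_or_antitone hw hab ha hb]
  refine tendsto_order.2 ⟨fun c hc => ?_, fun c hc => ?_⟩
  · obtain ⟨x, ⟨hx, hxB⟩, y, ⟨hy, hyB⟩, hlt⟩ := exists_mem_Ioo_lt_edist hab ha hb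
      (hB.isOpen_compl.mem_nhds haB) (hB.isOpen_compl.mem_nhds hbB) hc
    filter_upwards [((hlim x hxB).edist (hlim y hyB)).eventually_const_lt hlt] with n hn
    exact hn.trans_le (eVariationOn.edist_le (v n) hx hy)
  · obtain ⟨δ, hδ, hlt⟩ := ENNReal.lt_iff_exists_add_pos_lt.1 hc
    filter_upwards [hvar δ hδ] with n hn
    refine ((eVariationOn.mono _ Ioo_subset_Icc_self).trans hn).trans_lt ?_
    rwa [ENNReal.ofReal_add dist_nonneg δ.coe_nonneg, ENNReal.ofReal_coe_nnreal, ← edist_dist]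

lemma dist_le_of_eVariationOn_Icc_le {E : Type*} [PseudoMetricSpace E] {w : ℝ → E} {C : ℝ}
    (hC : 0 ≤ C) (hw : eVariationOn w (Icc a b) ≤ ENNReal.ofReal C) {x y : ℝ}
    (hx : x ∈ Icc a b) (hy : y ∈ Icc a b) : dist (w x) (w y) ≤ C :=
  (edist_le_ofReal hC).1 ((eVariationOn.edist_le w hx hy).trans hw)

lemma tendsto_integral_abs_sub (hw : Monotone w ∨ Antitone w) (hab : a ≤ b) (hBc : B.Countable)
    (haB : a ∉ B) (hvm : ∀ᶠ n in atTop, Measurable (v n))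
    (hlim : ∀ y ∉ B, Tendsto (fun n => v n y) atTop (nhds (w y)))
    (hvar : ∀ δ > 0, ∀ᶠ n in atTop,
      eVariationOn (v n) (Icc a b) ≤ ENNReal.ofReal (dist (w a) (w b) + δ)) :
    Tendsto (fun n => ∫ x in Ioo a b, |v n x - w x|) atTop (nhds 0) := by
  have hwm : Measurable w := hw.elim Monotone.measurable Antitone.measurable
  have hwvar : eVariationOn w (Icc a b) ≤ ENNReal.ofReal (dist (w a) (w b)) := by
    rw [eVariationOn_Icc_of_monotone_or_antitone hw hab, edist_dist]
  rw [← integral_zero ℝ ℝ (μ := volume.restrict (Ioo a b))]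
  refine tendsto_integral_filter_of_dominated_convergence
    (fun _ => dist (w a) (w b) + 1 + 1 + dist (w a) (w b)) ?_ ?_ (integrable_const _) ?_
  · filter_upwards [hvm] with n hn
    exact (hn.sub hwm).abs.aestronglyMeasurable
  · filter_upwards [hvar 1 one_pos, (hlim a haB).eventually (Metric.ball_mem_nhds _ one_pos)]
      with n hn hna
    refine ae_restrict_of_forall_mem measurableSet_Ioo fun x hx => ?_
    rw [Real.norm_eq_abs, abs_abs, ← Real.dist_eq]
    have ha : a ∈ Icc a b := left_mem_Icc.2 hab
    have hx : x ∈ Icc a b := Ioo_subset_Icc_self hx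
    exact (dist_triangle4 _ (v n a) (w a) _).trans (add_le_add (add_le_add
      (dist_le_of_eVariationOn_Icc_le (by positivity) hn hx ha) (Metric.mem_ball.1 hna).le)
      (dist_le_of_eVariationOn_Icc_le dist_nonneg hwvar ha hx))
  · filter_upwards [ae_restrict_of_ae (hBc.ae_notMem volume)] with x hx
    exact tendsto_iff_dist_tendsto_zero.1 (hlim x hx)

lemma CloseTo.tendsto (hB : IsClosed B) (hv : ∀ ε > 0, ∀ᶠ n in atTop, CloseTo B w (v n) ε) {y : ℝ}
    (hy : y ∉ B) : Tendsto (fun n => v n y) atTop (nhds (w y)) := by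
  obtain ⟨r, hr, hball⟩ := Metric.isOpen_iff.1 hB.isOpen_compl y hy
  refine Metric.tendsto_nhds.2 fun δ hδ => ?_
  set ε := min r (min (δ / 2) (1 / (|y| + 1))) with hε
  have hε0 : 0 < ε := by positivity
  obtain ⟨hεr, hεδ, hεy⟩ : ε ≤ r ∧ ε ≤ δ / 2 ∧ ε ≤ 1 / (|y| + 1) := by
    simpa only [le_min_iff] using hε.le
  have hyR : |y| + 1 ≤ 1 / ε := (le_one_div (by positivity) hε0).2 hεy
  filter_upwards [hv ε hε0] with n hn
  rw [Real.dist_eq]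
  refine (hn.abs_sub_le y (by linarith) fun z hz => ?_).trans_lt (by linarith)
  by_contra! hlt
  exact hball (Metric.mem_ball'.2 (by rw [Real.dist_eq]; linarith)) hz

lemma CloseTo.eventually_eVariationOn_le (hB : IsClosed B)
    (hv : ∀ ε > 0, ∀ᶠ n in atTop, CloseTo B w (v n) ε) (hab : a ≤ b) (haB : a ∉ B) (hbB : b ∉ B)
    {δ : ℝ} (hδ : 0 < δ) :
    ∀ᶠ n in atTop, eVariationOn (v n) (Icc a b) ≤ ENNReal.ofReal (dist (w a) (w b) + δ) := by
  set ε := min (δ / 2) (1 / (|a| + |b| + 1)) with hε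
  have hε0 : 0 < ε := by positivity
  obtain ⟨hεδ, hεR⟩ : ε ≤ δ / 2 ∧ ε ≤ 1 / (|a| + |b| + 1) := by
    simpa only [le_min_iff] using hε.le
  have hR : |a| + |b| + 1 ≤ 1 / ε := (le_one_div (by positivity) hε0).2 hεR
  have hdist : ∀ᶠ n in atTop, dist (v n a) (v n b) < dist (w a) (w b) + δ / 2 :=
    ((CloseTo.tendsto hB hv haB).dist (CloseTo.tendsto hB hv hbB)).eventually_lt_const
      (by linarith)
  filter_upwards [hv ε hε0, hdist] with n hn hlt
  refine (hn.eVariationOn_le a b (by linarith [abs_nonneg b]) (by linarith [abs_nonneg a])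
    hab).trans (ENNReal.ofReal_le_ofReal ?_)
  rw [← Real.dist_eq, dist_comm]
  linarith

lemma locStrictBV_of_closeTo (hw : Monotone w ∨ Antitone w) (hB : IsClosed B)
    (hBw : ∀ y ∈ B, ¬ContinuousAt w y) (hvm : ∀ᶠ n in atTop, Measurable (v n))
    (hv : ∀ ε > 0, ∀ᶠ n in atTop, CloseTo B w (v n) ε) : LocStrictBV v w := by
  intro a b hab ha hb
  have hlim : ∀ y ∉ B, Tendsto (fun n => v n y) atTop (nhds (w y)) := fun _ => CloseTo.tendsto hB hv
  have haB : a ∉ B := fun h => hBw a h ha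
  have hbB : b ∉ B := fun h => hBw b h hb
  have hBc : B.Countable := (countable_not_continuousAt_of_monotone_or_antitone hw).mono hBw
  have hvar := fun δ (hδ : δ > 0) => CloseTo.eventually_eVariationOn_le hB hv hab.le haB hbB hδ
  exact ⟨tendsto_integral_abs_sub hw hab.le hBc haB hvm hlim hvar,
    tendsto_eVariationOn_Ioo hw hab ha hb hB haB hbB hlim hvar⟩

end Strict

/-! ### Oblique translations of the staircase -/

section Staircase

variable {H V τ : ℝ}

lemma isClosed_stairBreaks (hH : 0 < H) (τ : ℝ) : IsClosed (stairBreaks H τ) := by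
  have hsep : Pairwise fun i j : ℤ =>
      H ≤ dist (H * (τ + 2 * (i : ℝ) - 1)) (H * (τ + 2 * (j : ℝ) - 1)) := by
    intro i j hij
    have hdist : (1 : ℝ) ≤ |(i : ℝ) - j| := by
      exact_mod_cast Int.one_le_abs (sub_ne_zero.2 hij)
    have hdiff : H * (τ + 2 * i - 1) - H * (τ + 2 * j - 1) = H * (2 * ((i : ℝ) - j)) := by ring
    rw [Real.dist_eq, hdiff, abs_mul, abs_mul, abs_of_pos hH, abs_two]
    exact le_mul_of_one_le_right hH.le (by linarith)
  exact (Metric.isClosedEmbedding_of_pairwise_le_dist hH hsep).isClosed_range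

lemma obliqueStair_not_continuousAt (hH : 0 < H) (hV : V ≠ 0) {y : ℝ} (hy : y ∈ stairBreaks H τ) :
    ¬ContinuousAt (obliqueStair H V τ) y := by
  obtain ⟨k, rfl⟩ := hy
  intro hc
  have hvalue : Tendsto (obliqueStair H V τ) (nhdsWithin (H * (τ + 2 * k - 1))
      (Iio (H * (τ + 2 * k - 1)))) (nhds (V * (τ + 2 * k))) := by
    rw [← obliqueStair_of_mem_Ico (V := V) hH ⟨le_rfl, by gcongr; linarith⟩]
    exact hc.tendsto.mono_left nhdsWithin_le_nhds
  have hleft : Tendsto (obliqueStair H V τ) (nhdsWithin (H * (τ + 2 * k - 1))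
      (Iio (H * (τ + 2 * k - 1)))) (nhds (V * (τ + 2 * (k - 1 : ℤ)))) := by
    refine tendsto_const_nhds.congr' ?_
    have hlt : H * (τ + 2 * (k - 1 : ℤ) - 1) < H * (τ + 2 * k - 1) := by
      gcongr
      linarith
    filter_upwards [Ioo_mem_nhdsLT hlt] with y hy
    refine (obliqueStair_of_mem_Ico hH ⟨hy.1.le, hy.2.trans_eq ?_⟩).symm
    push_cast
    ring
  have heq := mul_left_cancel₀ hV (tendsto_nhds_unique hvalue hleft)
  push_cast at heq
  linarith

lemma monotone_stairS : Monotone stairS := fun x y hxy => by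
  unfold stairS
  gcongr

lemma obliqueStair_monotone_or_antitone (hH : 0 < H) (V τ : ℝ) :
    Monotone (obliqueStair H V τ) ∨ Antitone (obliqueStair H V τ) := by
  have hS : Monotone fun y => stairS ((y - H * τ) / H) :=
    monotone_stairS.comp fun x y hxy => by gcongr
  exact (le_total 0 V).imp (fun hV => (hS.const_mul hV).add_const _)
    fun hV => (hS.const_mul_of_nonpos hV).add_const _

end Staircase

/-! ### Oblique translations as limits of blow-ups -/

/-- `limsup g` is the junk value `0` if the eventual upper bounds of `g` are unbounded below. -/
lemma limsup_le_of_eventually_le_of_nonneg {ι : Type*} {l : Filter ι} {g : ι → ℝ} {c : ℝ}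
    (hg : ∀ᶠ n in l, g n ≤ c) (hc : 0 ≤ c) : limsup g l ≤ c := by
  rw [limsup_eq]
  by_cases h : BddBelow {a | ∀ᶠ n in l, g n ≤ a}
  · exact csInf_le h hg
  · rwa [Real.sInf_of_not_bddBelow h]

lemma IsPC.measurable_blowup {n : ℕ} (hn : 0 < n) {u : ℝ → ℝ} (hu : IsPC (1 / (n : ℝ)) u)
    (f : ℝ → ℝ) (x : ℝ) : Measurable (blowup n u f x) := by
  have := hu.measurable hn
  unfold blowup
  fun_prop

lemma exists_locStrictBV_blowup {f w : ℝ → ℝ} {u : ℕ → ℝ → ℝ} {k : ℕ → ℕ} {B : Set ℝ}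
    (hu : ∀ n : ℕ, 2 ≤ n → IsPC (1 / (n : ℝ)) (u n)) (hw : Monotone w ∨ Antitone w)
    (hB : IsClosed B) (hBw : ∀ y ∈ B, ¬ContinuousAt w y)
    (hex : ∀ ε > 0, ∀ᶠ n in atTop, ∃ x ∈ Ioo (0 : ℝ) 1, x ≤ k n / n ∧
      CloseTo B w (blowup n (u n) f x) ε) :
    ∃ x : ℕ → ℝ, (∀ n, x n ∈ Ioo (0 : ℝ) 1) ∧ (∀ᶠ n in atTop, x n ≤ k n / n) ∧
      LocStrictBV (fun n => blowup n (u n) f (x n)) w := by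
  obtain ⟨x, hx01, hx⟩ := exists_diagonal
    (P := fun n ε x => x ≤ (k n : ℝ) / n ∧ CloseTo B w (blowup n (u n) f x) ε)
    (nonempty_Ioo.2 one_pos) (fun n x ε ε' h hε hle => ⟨h.1, h.2.mono hε hle⟩) hex
  refine ⟨x, hx01, (hx 1 one_pos).mono fun n h => h.1,
    locStrictBV_of_closeTo hw hB hBw ?_ fun ε hε => (hx ε hε).mono fun n h => h.2⟩
  filter_upwards [eventually_ge_atTop 2] with n hn
  exact (hu n hn).measurable_blowup (by omega) f (x n)

section Limit

variable {β M H xinf : ℝ} {f w : ℝ → ℝ} {u : ℕ → ℝ → ℝ} {k : ℕ → ℕ}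

lemma exists_locStrictBV_blowup_of_slope_ne_zero (hβ : 0 < β) (hf : ContinuousOn f (Icc 0 1))
    (hM : HasStrictDerivAt f M xinf) (hM0 : M ≠ 0) (hu : ∀ n, 2 ≤ n → IsMinimizer n β f (u n))
    (hxinf : xinf ∈ Ioo (0 : ℝ) 1) (hx : Tendsto (fun n => (k n : ℝ) / n) atTop (nhds xinf))
    (hH : H = (1 / (β * |M| ^ 2)) ^ ((1 : ℝ) / 3)) (hw : Obl H (M * H) w) :
    ∃ x : ℕ → ℝ, (∀ n, x n ∈ Ioo (0 : ℝ) 1) ∧ (∀ᶠ n in atTop, x n ≤ k n / n) ∧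
      LocStrictBV (fun n => blowup n (u n) f (x n)) w := by
  obtain ⟨τ, hτ, hwτ⟩ := hw
  obtain rfl : w = obliqueStair H (M * H) τ := funext hwτ
  have hM2 : 0 < |M| ^ 2 := pow_pos (abs_pos.2 hM0) 2
  have hH0 : 0 < H := hH ▸ by positivity
  have hH3 : H ^ 3 = 1 / (β * |M| ^ 2) := by
    rw [hH, one_div (3 : ℝ)]
    exact_mod_cast Real.rpow_inv_natCast_pow (by positivity) three_ne_zero
  have hMH : β * M ^ 2 * H ^ 3 = 1 := by
    rw [hH3, sq_abs, mul_one_div_cancel (mul_pos hβ (sq_abs M ▸ hM2)).ne']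
  exact exists_locStrictBV_blowup (fun n hn => (hu n hn).1)
    (obliqueStair_monotone_or_antitone hH0 _ τ) (isClosed_stairBreaks hH0 τ)
    (fun y => obliqueStair_not_continuousAt hH0 (mul_ne_zero hM0 hH0.ne')) fun ε hε =>
      eventually_exists_closeTo_obliqueStair hβ hf hM hM0 hxinf hx hu hH0 hMH (abs_le.2 hτ) hε

lemma exists_locStrictBV_blowup_zero (hβ : 0 < β) (hf : ContinuousOn f (Icc 0 1))
    (hM : HasStrictDerivAt f 0 xinf) (hu : ∀ n, 2 ≤ n → IsMinimizer n β f (u n))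
    (hxinf : xinf ∈ Ioo (0 : ℝ) 1) (hx : Tendsto (fun n => (k n : ℝ) / n) atTop (nhds xinf)) :
    ∃ x : ℕ → ℝ, (∀ n, x n ∈ Ioo (0 : ℝ) 1) ∧ (∀ᶠ n in atTop, x n ≤ k n / n) ∧
      LocStrictBV (fun n => blowup n (u n) f (x n)) fun _ => 0 :=
  exists_locStrictBV_blowup (fun n hn => (hu n hn).1) (Or.inl monotone_const) isClosed_empty
    (fun _ => False.elim) fun _ hε => eventually_exists_closeTo_zero hβ hf hM hxinf hx hu hε

end Limit

theorem every_oblique_translation_is_blowup_limit_general {β : ℝ} (hβ : 0 < β) {f : ℝ → ℝ}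
    (hf : ContinuousOn f (Icc 0 1)) {M xinf : ℝ} (hM : HasStrictDerivAt f M xinf)
    {u : ℕ → ℝ → ℝ} (hu : ∀ n, 2 ≤ n → IsMinimizer n β f (u n)) {k : ℕ → ℕ}
    (hxinf : xinf ∈ Ioo (0 : ℝ) 1) (hx : Tendsto (fun n => (k n : ℝ) / n) atTop (nhds xinf))
    {H V : ℝ} (hH : H = (1 / (β * |M| ^ 2)) ^ ((1 : ℝ) / 3)) (hV : V = M * H) {w : ℝ → ℝ}
    (hw : Obl H V w) :
    ∃ x : ℕ → ℝ, (∀ n, x n ∈ Ioo (0 : ℝ) 1) ∧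
      limsup (fun n => (x n - k n / n) / omg n) atTop ≤ H ∧
      LocStrictBV (fun n y => (u n (x n + omg n * y) - f (x n)) / omg n) w := by
  subst hV
  obtain ⟨x, hx01, hxk, hlim⟩ : ∃ x : ℕ → ℝ, (∀ n, x n ∈ Ioo (0 : ℝ) 1) ∧
      (∀ᶠ n in atTop, x n ≤ k n / n) ∧ LocStrictBV (fun n => blowup n (u n) f (x n)) w := by
    rcases eq_or_ne M 0 with rfl | hM0
    · obtain ⟨τ, -, hwτ⟩ := hw
      obtain rfl : w = fun _ => 0 := funext fun y => by simp [hwτ, canStair]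
      exact exists_locStrictBV_blowup_zero hβ hf hM hu hxinf hx
    · exact exists_locStrictBV_blowup_of_slope_ne_zero hβ hf hM hM0 hu hxinf hx hH hw
  refine ⟨x, hx01, limsup_le_of_eventually_le_of_nonneg ?_ (hH ▸ by positivity), hlim⟩
  filter_upwards [hxk] with n hn
  exact (div_nonpos_of_nonpos_of_nonneg (sub_nonpos.2 hn) (omg_nonneg n)).trans
    (hH ▸ by positivity)

/-- Every oblique translation `w` of the canonical `(H,V)`-staircase is
attained as limit of blow-ups of minimizers centered at suitable nearby points `x_n'`,
with `limsup (x_n' − x_n)/ω(n) ≤ H`. -/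
theorem every_oblique_translation_is_blowup_limit
    (β : ℝ) (hβ : 0 < β) (f f' : ℝ → ℝ)
    (hder : ∀ x ∈ Set.Icc (0 : ℝ) 1, HasDerivAt f (f' x) x)
    (hcont : ContinuousOn f' (Set.Icc (0 : ℝ) 1))
    (u : ℕ → ℝ → ℝ) (hu : ∀ n, 2 ≤ n → IsMinimizer n β f (u n))
    (k : ℕ → ℕ) (hk : ∀ n, 2 ≤ n → k n < n)
    (xs : ℕ → ℝ) (hxs : ∀ n, xs n = (k n : ℝ) / (n : ℝ))
    (xinf : ℝ) (hxinf : xinf ∈ Set.Ioo (0 : ℝ) 1)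
    (hx : Tendsto xs atTop (nhds xinf))
    (H V : ℝ)
    (hH : H = (1 / (β * |f' xinf| ^ 2)) ^ ((1 : ℝ) / 3))
    (hV : V = f' xinf * H) :
    ∀ w : ℝ → ℝ, Obl H V w →
      ∃ xs' : ℕ → ℝ, (∀ n, xs' n ∈ Set.Ioo (0 : ℝ) 1) ∧
        Filter.limsup (fun n => (xs' n - xs n) / omg n) atTop ≤ H ∧
        LocStrictBV (fun n y => (u n (xs' n + omg n * y) - f (xs' n)) / omg n) w := by
  obtain rfl : xs = fun n => (k n : ℝ) / n := funext hxs
  exact fun w hw => every_oblique_translation_is_blowup_limit_general hβ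
    (fun x hx => (hder x hx).continuousAt.continuousWithinAt)
    (hasStrictDerivAt_of_hasDerivAt_of_continuousAt
      (mem_of_superset (Icc_mem_nhds hxinf.1 hxinf.2) hder)
      (hcont.continuousAt (Icc_mem_nhds hxinf.1 hxinf.2))) hu hxinf hx hH hV hw

end PeronaMalik
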